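/- arXiv:2406.05550 — 14 statements merged into one kernel-verified Lean document; each statement's English description precedes it below -/
import Mathlib

section
/- Let k be an algebraically closed field, let A be a finitely generated commutative k-algebra, and let B be a commutative k-algebra. If A and B are both reduced (have no nonzero nilpotent elements), then the tensor product A ⊗ₖ B is reduced. -/
open scoped TensorProduct

/-- Let `k` be an algebraically closed field, `A` a finitely generated commutative
`k`-algebra and `B` a commutative `k`-algebra. If `A` and `B` are reduced, then
`A ⊗[k] B` is reduced. -/
theorem isReduced_tensorProduct_of_isAlgClosed
    (k A B : Type*) [Field k] [IsAlgClosed k]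
    [CommRing A] [CommRing B] [Algebra k A] [Algebra k B]
    [Algebra.FiniteType k A] [IsReduced A] [IsReduced B] :
    IsReduced (A ⊗[k] B) := by
  have hJ : IsJacobsonRing A := isJacobsonRing_of_finiteType (A := k)
  have key : ∀ a : A, (∀ φ : A →ₐ[k] k, φ a = 0) → a = 0 := by
    intro a ha
    have h1 : a ∈ (⊥ : Ideal A).jacobson := by
      rw [Ideal.jacobson, Ideal.mem_sInf]
      rintro m ⟨-, hm⟩
      letI : Field (A ⧸ m) := Ideal.Quotient.field m
      have : Module.Finite k (A ⧸ m) := finite_of_finite_type_of_isJacobsonRing k (A ⧸ m)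
      let ψ : (A ⧸ m) →ₐ[k] k := IsAlgClosed.lift
      have h := ha (ψ.comp (Ideal.Quotient.mkₐ k m))
      have h2 : ψ (Ideal.Quotient.mk m a) = 0 := h
      rw [map_eq_zero_iff ψ ψ.toRingHom.injective] at h2
      exact Ideal.Quotient.eq_zero_iff_mem.mp h2
    rw [← Ideal.radical_eq_jacobson] at h1
    obtain ⟨n, hn⟩ := h1
    exact IsNilpotent.eq_zero ⟨n, by simpa using hn⟩
  refine ⟨fun x hx => ?_⟩
  let b := Module.Basis.ofVectorSpace k B
  let c := Algebra.TensorProduct.basis A b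
  apply c.repr.injective
  ext i
  rw [map_zero, Finsupp.zero_apply]
  apply key
  intro φ
  let F : A ⊗[k] B →ₐ[k] B :=
    Algebra.TensorProduct.productMap ((Algebra.ofId k B).comp φ) (AlgHom.id k B)
  have hF : ∀ y, φ (c.repr y i) = b.repr (F y) i := by
    intro y
    induction y with
    | zero => simp
    | add y z hy hz => simp [hy, hz]
    | tmul a y =>
      simp [c, F, Algebra.TensorProduct.basis_repr_tmul, Algebra.ofId_apply, ← Algebra.smul_def]
  rw [hF, (hx.map F).eq_zero]
  simp
end

section
/- Let k be an algebraically closed field, let A be a finitely generated commutative k-algebra, and let B be a commutative k-algebra. If A and B are both integral domains, then the tensor product A ⊗ₖ B is an integral domain. -/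
open scoped TensorProduct

theorem exists_algHom_ne_zero_aux
    (k A : Type*) [Field k] [IsAlgClosed k] [CommRing A] [Algebra k A]
    [Algebra.FiniteType k A] [IsDomain A] (a : A) (ha : a ≠ 0) :
    ∃ φ : A →ₐ[k] k, φ a ≠ 0 := by
  have hJ : IsJacobsonRing A := isJacobsonRing_of_finiteType (A := k)
  have h0 : (⊥ : Ideal A).jacobson = ⊥ := hJ.out Ideal.isPrime_bot.isRadical
  have h1 : a ∉ (⊥ : Ideal A).jacobson := by rw [h0]; simpa using ha
  rw [Ideal.jacobson, Submodule.mem_sInf] at h1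
  push Not at h1
  obtain ⟨m, ⟨-, hm⟩, ham⟩ := h1
  letI : Field (A ⧸ m) := Ideal.Quotient.field m
  have hf : Module.Finite k (A ⧸ m) := finite_of_finite_type_of_isJacobsonRing k (A ⧸ m)
  have hb := IsAlgClosed.algebraMap_bijective_of_isIntegral (k := k) (K := A ⧸ m)
  let e : k ≃ₐ[k] (A ⧸ m) := AlgEquiv.ofBijective (Algebra.ofId k (A ⧸ m)) hb
  refine ⟨(e.symm : (A ⧸ m) →ₐ[k] k).comp (Ideal.Quotient.mkₐ k m), fun h => ham ?_⟩
  have h2 : e.symm (Ideal.Quotient.mk m a) = 0 := h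
  rw [EmbeddingLike.map_eq_zero_iff] at h2
  exact Ideal.Quotient.eq_zero_iff_mem.mp h2

/-- Let `k` be an algebraically closed field, `A` a finitely generated commutative
`k`-algebra and `B` a commutative `k`-algebra. If `A` and `B` are integral
domains, then `A ⊗[k] B` is an integral domain. -/
theorem isDomain_tensorProduct_of_isAlgClosed
    (k A B : Type*) [Field k] [IsAlgClosed k]
    [CommRing A] [CommRing B] [Algebra k A] [Algebra k B]
    [Algebra.FiniteType k A] [IsDomain A] [IsDomain B] :
    IsDomain (A ⊗[k] B) := by
  let b := Module.Basis.ofVectorSpace k B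
  let c := b.baseChange A
  let F (φ : A →ₐ[k] k) : A ⊗[k] B →ₐ[k] B :=
    Algebra.TensorProduct.lift ((Algebra.ofId k B).comp φ) (AlgHom.id k B) (fun _ _ => Commute.all _ _)
  have key : ∀ φ u i, b.repr (F φ u) i = φ (c.repr u i) := by
    intro φ u i
    induction u with
    | zero => simp
    | add x y hx hy => simp [hx, hy]
    | tmul x y =>
      simp [F, c, Algebra.ofId_apply, mul_comm]
      rw [mul_comm, ← Algebra.smul_def]
      simp
  have hc : ∀ u : A ⊗[k] B, u ≠ 0 → ∃ i, c.repr u i ≠ 0 := by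
    intro u hu
    by_contra! h
    exact hu (c.repr.map_eq_zero_iff.mp (Finsupp.ext h))
  have hne : ∀ φ u i, φ (c.repr u i) ≠ 0 → F φ u ≠ 0 := by
    intro φ u i h h0
    apply h
    rw [← key, h0]
    simp
  have : Nontrivial (A ⊗[k] B) := inferInstance
  have : NoZeroDivisors (A ⊗[k] B) := by
    refine ⟨fun {u v} huv => ?_⟩
    by_contra! h
    obtain ⟨i, hi⟩ := hc u h.1
    obtain ⟨j, hj⟩ := hc v h.2
    obtain ⟨φ, hφ⟩ := exists_algHom_ne_zero_aux k A _ (mul_ne_zero hi hj)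
    rw [map_mul] at hφ
    have h3 := mul_ne_zero (hne φ u i (left_ne_zero_of_mul hφ)) (hne φ v j (right_ne_zero_of_mul hφ))
    rw [← map_mul, huv, map_zero] at h3
    exact h3 rfl
  exact NoZeroDivisors.to_isDomain _
end

section
/- Let k be a separably closed field and let V be a scheme of finite type and separated over k that is geometrically reduced (i.e., V ×_{Spec k} Spec K is reduced for some/every algebraically closed field extension K of k). Then the set of k-rational points of V, i.e., the set of images in the underlying topological space of V of all k-morphisms Spec k → V, is dense in the underlying topological space of V (for the Zariski topology). -/
open AlgebraicGeometry CategoryTheory CategoryTheory.Limits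

section Alg
open TensorProduct

lemma aux_infinite (k : Type*) [Field k] [IsSepClosed k] : Infinite k := by
  by_contra h
  rw [not_infinite_iff_finite] at h
  have : Infinite k := inferInstance
  exact not_finite k

lemma aux_linindep {k L Ω : Type*} [Field k] [Field L] [Algebra k L] [Field Ω] [Algebra k Ω]
    [IsAlgClosed Ω] [IsReduced (L ⊗[k] Ω)] (p : ℕ) [Fact p.Prime] [CharP k p]
    (s : Finset L) (hs : LinearIndepOn k id (s : Set L)) :
    LinearIndepOn k (· ^ p) (s : Set L) := by
  have hp : p ≠ 0 := (Fact.out : p.Prime).ne_zero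
  have hpp : 0 < p := Nat.pos_of_ne_zero hp
  have : CharP L p := charP_of_injective_algebraMap (algebraMap k L).injective p
  have : CharP (L ⊗[k] Ω) p := charP_of_injective_algebraMap (algebraMap k (L ⊗[k] Ω)).injective p
  have : ExpChar (L ⊗[k] Ω) p := .prime Fact.out
  classical
  have hs0 := hs
  rw [linearIndepOn_finset_iff] at hs ⊢
  intro c hc i hi
  choose b hb using fun i => IsAlgClosed.exists_pow_nat_eq (algebraMap k Ω (c i)) hpp
  have h1 : ∑ i ∈ s, i ⊗ₜ[k] b i = 0 := by
    refine eq_zero_of_pow_eq_zero (n := p) ?_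
    rw [sum_pow_char]
    simp_rw [Algebra.TensorProduct.tmul_pow, hb, Algebra.algebraMap_eq_smul_one, ← smul_tmul,
      ← sum_tmul]
    rw [hc, zero_tmul]
  have hb0 : b i = 0 := by
    let B := Module.Basis.extend hs0
    have hsub := hs0.subset_extend (Set.subset_univ (s : Set L))
    have hB : ∀ j ∈ s, B.coord ⟨i, hsub hi⟩ j = if j = i then 1 else 0 := by
      intro j hj
      have : j = B ⟨j, hsub hj⟩ := by simp [B]
      conv_lhs => rw [this]
      rw [Module.Basis.coord_apply, Module.Basis.repr_self, Finsupp.single_apply]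
      simp
    have h2 := congrArg (TensorProduct.lid k Ω ∘ (B.coord ⟨i, hsub hi⟩).rTensor Ω) h1
    simp only [Function.comp_apply, map_sum, LinearMap.rTensor_tmul, map_zero, lid_tmul] at h2
    rw [Finset.sum_congr rfl (fun j hj => by rw [hB j hj])] at h2
    simpa [hi] using h2
  have := hb i
  rw [hb0, zero_pow hp] at this
  simpa using this.symm

lemma aux_smooth {k L Ω : Type*} [Field k] [Field L] [Algebra k L] [Field Ω] [Algebra k Ω]
    [IsAlgClosed Ω] [IsReduced (L ⊗[k] Ω)] [Algebra.EssFiniteType k L] :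
    Algebra.FormallySmooth k L := by
  obtain _ | ⟨p, hp, hpk⟩ := CharP.exists' k
  · infer_instance
  · obtain ⟨s, hs, H⟩ :=
      exists_isTranscendenceBasis_and_isSeparable_of_linearIndepOn_pow_of_essFiniteType (k := k)
      (K := L) p hp.out (fun s hs => aux_linindep (Ω := Ω) p s hs)
    have : Algebra.IsSeparable (↥(IntermediateField.adjoin k (Set.range ((↑) : s → L)))) L := by
      convert! H <;> simp
    exact .of_algebraicIndependent_of_isSeparable hs.1

lemma aux_smoothAt {k A Ω : Type*} [Field k] [CommRing A] [Algebra k A] [Nontrivial A]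
    [Field Ω] [Algebra k Ω] [Algebra.FiniteType k A]
    [IsAlgClosed Ω] [IsReduced (A ⊗[k] Ω)] :
    ∃ (p : Ideal A) (_ : p.IsPrime), Algebra.IsSmoothAt k p := by
  have : IsReduced A := isReduced_of_injective
    (Algebra.TensorProduct.includeLeft : A →ₐ[k] A ⊗[k] Ω)
    (Algebra.TensorProduct.includeLeft_injective (algebraMap k Ω).injective)
  obtain ⟨p, hp⟩ := Ideal.nonempty_minimalPrimes (I := (⊥ : Ideal A)) bot_ne_top
  have hp' : p.IsPrime := hp.1.1
  refine ⟨p, hp', ?_⟩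
  let L := Localization.AtPrime p
  have hF : IsField L := by
    rw [← PrimeSpectrum.subsingleton_iff_isField_of_isReduced]
    exact IsLocalization.subsingleton_primeSpectrum_of_mem_minimalPrimes _ hp L
  let : Field L := hF.toField
  have : IsReduced ((A ⊗[k] Ω) ⊗[A] L) :=
    isReduced_localizationPreserves (Algebra.algebraMapSubmonoid (A ⊗[k] Ω) p.primeCompl) _ ‹_›
  have : IsReduced (L ⊗[k] Ω) := isReduced_of_injective
    ((Algebra.TensorProduct.cancelBaseChange k A A L Ω).symm.trans
      (Algebra.TensorProduct.comm A L (A ⊗[k] Ω))) (AlgEquiv.injective _)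
  have : Algebra.EssFiniteType k L := .comp k A L
  exact aux_smooth (Ω := Ω)

lemma aux_section {k P B : Type*} [Field k] [CommRing P] [CommRing B] [Algebra k P] [Algebra k B]
    [Algebra P B] [IsScalarTower k P B] [Algebra.Etale P B] [IsSepClosed k]
    (ev : P →ₐ[k] k) (q : Ideal B) [q.IsPrime] (hq : q.comap (algebraMap P B) = RingHom.ker ev) :
    Nonempty (B →ₐ[k] k) := by
  let : Algebra P k := ev.toRingHom.toAlgebra
  have : IsScalarTower k P k := .of_algebraMap_eq fun x => (ev.commutes x).symm
  have hsurj : Function.Surjective (algebraMap P k) := fun x => ⟨algebraMap k P x, ev.commutes x⟩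
  have hk : ∀ x, algebraMap P k x = 0 → x ∈ q.comap (algebraMap P B) := by
    rw [hq]; exact fun x hx => hx
  let φ : k →ₐ[P] B ⧸ q := AlgHom.mk ((algebraMap P k).liftOfSurjective hsurj
    ⟨algebraMap P (B ⧸ q), fun x hx => by
      rw [RingHom.mem_ker, IsScalarTower.algebraMap_apply P B (B ⧸ q)]
      exact Ideal.Quotient.eq_zero_iff_mem.mpr (hk x hx)⟩)
    (fun x => RingHom.liftOfRightInverse_comp_apply _ _ _ _ _)
  have : Nontrivial (k ⊗[P] B) :=
    (Algebra.TensorProduct.lift φ (IsScalarTower.toAlgHom P B (B ⧸ q)) (fun _ _ => Commute.all _ _)).toRingHom.domain_nontrivial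
  let e := Algebra.FormallyEtale.equivPiOfIsSepClosed k (k ⊗[P] B)
  obtain ⟨x⟩ : Nonempty (PrimeSpectrum (k ⊗[P] B)) := inferInstance
  let ψ : k ⊗[P] B →ₐ[k] k := (Pi.evalAlgHom k _ x).comp e.toAlgHom
  exact ⟨((ψ.restrictScalars P).comp Algebra.TensorProduct.includeRight).restrictScalars k⟩

lemma aux_etale {k B : Type*} [Field k] [CommRing B] [Algebra k B] {n : ℕ} [Nontrivial B]
    [Algebra (MvPolynomial (Fin n) k) B] [IsScalarTower k (MvPolynomial (Fin n) k) B]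
    [Algebra.Etale (MvPolynomial (Fin n) k) B] [IsSepClosed k] :
    Nonempty (B →ₐ[k] k) := by
  have := aux_infinite k
  have hflat : Module.Flat (MvPolynomial (Fin n) k) B := inferInstance
  have ho : IsOpen (Set.range (PrimeSpectrum.comap (algebraMap (MvPolynomial (Fin n) k) B))) :=
    PrimeSpectrum.isOpenMap_comap_of_hasGoingDown_of_finitePresentation.isOpen_range
  obtain ⟨x⟩ : Nonempty (PrimeSpectrum B) := inferInstance
  obtain ⟨_, ⟨_, ⟨g, rfl⟩, rfl⟩, hxg, hg⟩ :=
    PrimeSpectrum.isBasis_basic_opens.exists_subset_of_mem_open (Set.mem_range_self x) ho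
  have hg0 : g ≠ 0 := by
    rintro rfl
    simp at hxg
  obtain ⟨a, ha⟩ : ∃ a : Fin n → k, MvPolynomial.eval a g ≠ 0 := by
    by_contra! h
    exact hg0 (MvPolynomial.funext (by simpa using h))
  let ev : MvPolynomial (Fin n) k →ₐ[k] k := MvPolynomial.aeval a
  obtain ⟨q, hq⟩ := hg (show (⟨RingHom.ker ev, RingHom.ker_isPrime _⟩ : PrimeSpectrum _) ∈ _ by
    simpa [ev, MvPolynomial.aeval_eq_eval] using ha)
  exact aux_section ev q.asIdeal (congrArg PrimeSpectrum.asIdeal hq)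

lemma aux_alg {k A Ω : Type*} [Field k] [CommRing A] [Algebra k A] [Nontrivial A]
    [Field Ω] [Algebra k Ω] [Algebra.FiniteType k A] [IsSepClosed k]
    [IsAlgClosed Ω] [IsReduced (A ⊗[k] Ω)] : Nonempty (A →ₐ[k] k) := by
  obtain ⟨p, hp, h⟩ := aux_smoothAt (k := k) (A := A) (Ω := Ω)
  have : Algebra.FinitePresentation k A := Algebra.FinitePresentation.of_finiteType.mp ‹_›
  obtain ⟨f, hf, n, _, _, _⟩ := Algebra.IsSmoothAt.exists_isStandardEtale_mvPolynomial (R := k) (p := p)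
  have : Nontrivial (Localization.Away f) := by
    rw [← not_subsingleton_iff_nontrivial, IsLocalization.subsingleton_iff (M := .powers f)]
    rintro ⟨n, hn⟩
    exact hf (hp.mem_of_pow_mem n (by rw [show f ^ n = 0 from hn]; exact p.zero_mem))
  obtain ⟨φ⟩ := aux_etale (k := k) (B := Localization.Away f) (n := n)
  exact ⟨φ.comp (IsScalarTower.toAlgHom k A _)⟩

end Alg

/-- Let `k` be a separably closed field and let `V` be a geometrically reduced
algebraic scheme over `k` (separated and of finite type, with reduced base change
to every algebraically closed extension of `k`).  Then the set of `k`-rational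
points of `V` (images of `k`-morphisms `Spec k ⟶ V`) is dense in the underlying
topological space of `V`. -/
theorem dense_rationalPoints_of_isSepClosed
    {k : Type u} [Field k] [IsSepClosed k]
    (V : Scheme.{u}) (f : V ⟶ Spec (CommRingCat.of k))
    [IsSeparated f] [LocallyOfFiniteType f] [QuasiCompact f]
    (hgeom : ∀ (K : Type u) [Field K] [Algebra k K] [IsAlgClosed K],
      IsReduced (pullback f (Spec.map (CommRingCat.ofHom (algebraMap k K))))) :
    Dense {x : V | ∃ p : Spec (CommRingCat.of k) ⟶ V,
      p ≫ f = 𝟙 (Spec (CommRingCat.of k)) ∧ x ∈ Set.range p.base} := by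
  rw [dense_iff_inter_open]
  rintro U hU ⟨x, hx⟩
  obtain ⟨_, ⟨W, hW, rfl⟩, hxW, hWU⟩ := V.isBasis_affineOpens.exists_subset_of_mem_open hx hU
  have hW : IsAffineOpen W := hW
  let g := hW.fromSpec ≫ f
  let φ := Spec.preimage g
  have hφ : Spec.map φ = g := Spec.map_preimage g
  have hft : φ.hom.FiniteType := by
    rw [← HasRingHomProperty.Spec_iff (P := @LocallyOfFiniteType), hφ]
    infer_instance
  algebraize [φ.hom]
  let Ω := AlgebraicClosure k
  have hred : IsReduced (TensorProduct k Γ(V, W) Ω) := by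
    have := hgeom Ω
    let a := Spec.map (CommRingCat.ofHom (algebraMap k Ω))
    have h1 : IsReduced (pullback (Spec.map (CommRingCat.ofHom (algebraMap k Γ(V, W)))) a) :=
      isReduced_of_isOpenImmersion (pullback.map _ a f a hW.fromSpec (𝟙 _) (𝟙 _)
        (by rw [Category.comp_id]; exact hφ) (by simp))
    have h2 := isReduced_of_isOpenImmersion (pullbackSpecIso k Γ(V, W) Ω).inv
    exact (affine_isReduced_iff _).mp h2
  have : Nontrivial Γ(V, W) := by
    have : Nonempty W := ⟨⟨x, hxW⟩⟩
    infer_instance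
  obtain ⟨ψ⟩ := aux_alg (k := k) (A := Γ(V, W)) (Ω := Ω)
  let p := Spec.map (CommRingCat.ofHom ψ.toRingHom) ≫ hW.fromSpec
  refine ⟨p (IsLocalRing.closedPoint k), hWU ?_, p, ?_, Set.mem_range_self _⟩
  · rw [← hW.range_fromSpec]
    exact ⟨_, rfl⟩
  · rw [Category.assoc]
    change _ ≫ g = _
    rw [← hφ, ← Spec.map_comp, ← Spec.map_id]
    congr 1
    ext x
    exact ψ.commutes x
end

section
/- Let Ω ⊇ k be fields, let M be an Ω-vector space, and let V be a k-subspace (k-submodule) of M such that the canonical map Ω ⊗ₖ V → M, c ⊗ v ↦ c • v, is bijective. Let W be an Ω-subspace of M. Then: (i) there exists at most one k-subspace W₀ of V such that the map Ω ⊗ₖ W₀ → M, c ⊗ w ↦ c • w, is injective with image exactly W; (ii) such a W₀ exists if and only if W equals the Ω-span of the set V ∩ W, in which case W₀ = V ∩ W. -/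
open scoped TensorProduct

/-- For a `k`-subspace `V` of an `Ω`-vector space `M`, the canonical map
`Ω ⊗[k] V → M`, `c ⊗ v ↦ c • v`. -/
noncomputable def Submodule.expansionMap
    (k Ω M : Type*) [Field k] [Field Ω] [Algebra k Ω]
    [AddCommGroup M] [Module k M] [Module Ω M] [IsScalarTower k Ω M]
    (V : Submodule k M) : (Ω ⊗[k] V) →ₗ[k] M :=
  TensorProduct.lift
    { toFun := fun c => c • (V.subtype)
      map_add' := fun c c' => by simp [add_smul]
      map_smul' := fun a c => by simp [smul_assoc] }

theorem expansionMap_tmul'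
    (k Ω M : Type*) [Field k] [Field Ω] [Algebra k Ω]
    [AddCommGroup M] [Module k M] [Module Ω M] [IsScalarTower k Ω M]
    (V : Submodule k M) (c : Ω) (v : V) :
    Submodule.expansionMap k Ω M V (c ⊗ₜ v) = c • (v : M) := rfl

theorem expansionMap_incl
    (k Ω M : Type*) [Field k] [Field Ω] [Algebra k Ω]
    [AddCommGroup M] [Module k M] [Module Ω M] [IsScalarTower k Ω M]
    (V U : Submodule k M) (h : U ≤ V) (y : Ω ⊗[k] U) :
    Submodule.expansionMap k Ω M V ((Submodule.inclusion h).lTensor Ω y) =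
      Submodule.expansionMap k Ω M U y := by
  induction y with
  | zero => simp
  | add a b ha hb => rw [map_add, map_add, map_add, ha, hb]
  | tmul c v => rfl

theorem expansionMap_range
    (k Ω M : Type*) [Field k] [Field Ω] [Algebra k Ω]
    [AddCommGroup M] [Module k M] [Module Ω M] [IsScalarTower k Ω M]
    (U : Submodule k M) :
    Set.range (Submodule.expansionMap k Ω M U) = (Submodule.span Ω (U : Set M) : Set M) := by
  apply Set.Subset.antisymm
  · rintro _ ⟨y, rfl⟩
    induction y with
    | zero => simp
    | add a b ha hb => rw [map_add]; exact add_mem ha hb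
    | tmul c v => exact Submodule.smul_mem _ c (Submodule.subset_span v.2)
  · intro x hx
    refine Submodule.span_induction (p := fun x _ => x ∈ Set.range (Submodule.expansionMap k Ω M U))
      ?_ ?_ ?_ ?_ hx
    · intro x hx
      exact ⟨1 ⊗ₜ ⟨x, hx⟩, by simp [expansionMap_tmul']⟩
    · exact ⟨0, map_zero _⟩
    · rintro _ _ _ _ ⟨a, rfl⟩ ⟨b, rfl⟩
      exact ⟨a + b, map_add _ _ _⟩
    · rintro c x' _ ⟨a, ha'⟩
      rw [← ha']
      clear ha'
      refine ⟨c • a, ?_⟩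
      induction a with
      | zero => simp
      | add a b ha hb => rw [smul_add, map_add, map_add, smul_add, ha, hb]
      | tmul d v =>
        rw [TensorProduct.smul_tmul', expansionMap_tmul', expansionMap_tmul', smul_assoc]

theorem expansionMap_inj
    (k Ω M : Type*) [Field k] [Field Ω] [Algebra k Ω]
    [AddCommGroup M] [Module k M] [Module Ω M] [IsScalarTower k Ω M]
    (V U : Submodule k M) (h : U ≤ V)
    (hV : Function.Injective (Submodule.expansionMap k Ω M V)) :
    Function.Injective (Submodule.expansionMap k Ω M U) := by
  intro a b hab
  rw [← expansionMap_incl k Ω M V U h, ← expansionMap_incl k Ω M V U h] at hab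
  exact Module.Flat.lTensor_preserves_injective_linearMap (M := Ω) _
    (Submodule.inclusion_injective h) (hV hab)

theorem mem_of_mem_span'
    (k Ω M : Type*) [Field k] [Field Ω] [Algebra k Ω]
    [AddCommGroup M] [Module k M] [Module Ω M] [IsScalarTower k Ω M]
    (V U : Submodule k M) (h : U ≤ V)
    (hV : Function.Injective (Submodule.expansionMap k Ω M V))
    (x : M) (hx : x ∈ V) (hxU : x ∈ Submodule.span Ω (U : Set M)) : x ∈ U := by
  by_contra hn
  obtain ⟨f, hf, hfU⟩ := Submodule.exists_le_ker_of_notMem (p := U) hn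
  have hxU' : x ∈ Set.range (Submodule.expansionMap k Ω M U) := by
    rw [expansionMap_range]; exact hxU
  obtain ⟨y, hy⟩ := hxU'
  have e : (Submodule.inclusion h).lTensor Ω y = 1 ⊗ₜ ⟨x, hx⟩ := by
    apply hV
    rw [expansionMap_incl, hy, expansionMap_tmul', one_smul]
  have e2 := congrArg ((f.comp V.subtype).lTensor Ω) e
  rw [← LinearMap.lTensor_comp_apply] at e2
  have hz : (f.comp V.subtype).comp (Submodule.inclusion h) = 0 := by
    ext u
    exact hfU u.2
  rw [hz, LinearMap.lTensor_zero, LinearMap.zero_apply, LinearMap.lTensor_tmul] at e2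
  have e3 := congrArg (TensorProduct.rid k Ω) e2
  simp [Algebra.smul_def] at e3
  exact hf ((map_eq_zero (algebraMap k Ω)).1 e3.symm)

/-- Let `Ω ⊇ k` be fields, `M` an `Ω`-vector space and `V` a `k`-subspace of `M`
such that the canonical map `Ω ⊗[k] V → M` is bijective.  Let `W` be an
`Ω`-subspace of `M`.  Then (i) there is at most one `k`-subspace `W₀` of `V` such
that `Ω ⊗[k] W₀ → M` is injective with image exactly `W`; (ii) such a `W₀`
exists if and only if `W` is the `Ω`-span of `V ∩ W`, in which case
`W₀ = V ∩ W`. -/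
theorem submodule_descend_unique_exists
    (k Ω M : Type*) [Field k] [Field Ω] [Algebra k Ω]
    [AddCommGroup M] [Module k M] [Module Ω M] [IsScalarTower k Ω M]
    (V : Submodule k M) (hV : Function.Bijective (Submodule.expansionMap k Ω M V))
    (W : Submodule Ω M) :
    (∀ W₀ W₀' : Submodule k M, W₀ ≤ V → W₀' ≤ V →
        (Function.Injective (Submodule.expansionMap k Ω M W₀) ∧
          Set.range (Submodule.expansionMap k Ω M W₀) = (W : Set M)) →
        (Function.Injective (Submodule.expansionMap k Ω M W₀') ∧
          Set.range (Submodule.expansionMap k Ω M W₀') = (W : Set M)) →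
        W₀ = W₀') ∧
    ((∃ W₀ : Submodule k M, W₀ ≤ V ∧
        Function.Injective (Submodule.expansionMap k Ω M W₀) ∧
        Set.range (Submodule.expansionMap k Ω M W₀) = (W : Set M)) ↔
      Submodule.span Ω ((V ⊓ W.restrictScalars k : Submodule k M) : Set M) = W) ∧
    (∀ W₀ : Submodule k M, W₀ ≤ V →
        Function.Injective (Submodule.expansionMap k Ω M W₀) →
        Set.range (Submodule.expansionMap k Ω M W₀) = (W : Set M) →
        W₀ = V ⊓ W.restrictScalars k) := by
  have key : ∀ W₀ : Submodule k M, W₀ ≤ V →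
        Set.range (Submodule.expansionMap k Ω M W₀) = (W : Set M) →
        W₀ = V ⊓ W.restrictScalars k := by
    intro U hU hr
    rw [expansionMap_range] at hr
    have hr' := SetLike.coe_injective hr
    apply le_antisymm
    · intro x hx
      refine ⟨hU hx, ?_⟩
      change x ∈ W
      rw [← hr']
      exact Submodule.subset_span hx
    · rintro x ⟨hx, hxW⟩
      change x ∈ W at hxW
      rw [← hr'] at hxW
      exact mem_of_mem_span' k Ω M V U hU hV.1 x hx hxW
  refine ⟨?_, ⟨?_, ?_⟩, fun U hU _ hr => key U hU hr⟩
  · intro U U' hU hU' h h'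
    rw [key U hU h.2, key U' hU' h'.2]
  · rintro ⟨U, hU, _, hr⟩
    rw [← key U hU hr]
    rw [expansionMap_range] at hr
    exact SetLike.coe_injective hr
  · intro hs
    refine ⟨V ⊓ W.restrictScalars k, inf_le_left, expansionMap_inj k Ω M V _ inf_le_left hV.1, ?_⟩
    rw [expansionMap_range, hs]
end

section
/- Let Ω ⊇ k be fields such that k is the fixed field of Γ = Aut(Ω/k), the group of field automorphisms of Ω fixing k pointwise. Let V be a k-vector space, and let Γ act on Ω ⊗ₖ V by σ(c ⊗ v) = σ(c) ⊗ v for σ ∈ Γ, c ∈ Ω, v ∈ V. Then the set of elements of Ω ⊗ₖ V fixed by every σ ∈ Γ equals the image of V under the map v ↦ 1 ⊗ v. -/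
open scoped TensorProduct

/-- Let `Ω ⊇ k` be fields such that `k` is the fixed field of `Γ = Aut(Ω/k)`, and
let `V` be a `k`-vector space.  Letting `Γ` act on `Ω ⊗[k] V` through its action
on `Ω` (i.e. `σ(c ⊗ v) = σ(c) ⊗ v`), the set of elements fixed by every `σ ∈ Γ`
equals the image of `V` under `v ↦ 1 ⊗ v`. -/
theorem fixedPoints_baseChange_eq_range
    (k Ω V : Type*) [Field k] [Field Ω] [Algebra k Ω]
    (hk : ∀ a : Ω, (∀ σ : Ω ≃ₐ[k] Ω, σ a = a) → a ∈ Set.range (algebraMap k Ω))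
    [AddCommGroup V] [Module k V] :
    {x : Ω ⊗[k] V | ∀ σ : Ω ≃ₐ[k] Ω, LinearMap.rTensor V σ.toLinearMap x = x} =
      Set.range (fun v : V => (1 : Ω) ⊗ₜ[k] v) := by
  classical
  ext x
  simp only [Set.mem_ofPred_eq, Set.mem_range]
  constructor
  · intro hx
    let b := Module.Basis.ofVectorSpace k V
    let e := TensorProduct.equivFinsuppOfBasisRight (M := Ω) b
    have key : ∀ (σ : Ω ≃ₐ[k] Ω) (y : Ω ⊗[k] V) i,
        e (LinearMap.rTensor V σ.toLinearMap y) i = σ (e y i) := by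
      intro σ y i
      induction y using TensorProduct.induction_on with
      | zero => simp
      | tmul c v => simp [e, TensorProduct.equivFinsuppOfBasisRight_apply_tmul_apply]
      | add y z hy hz => simp only [map_add, Finsupp.add_apply, hy, hz]
    have h : ∀ i, ∃ a : k, algebraMap k Ω a = e x i := fun i =>
      hk _ fun σ => by rw [← key, hx]
    choose a ha using h
    refine ⟨(e x).sum fun i _ => a i • b i, ?_⟩
    have h2 : x = e.symm (e x) := (e.symm_apply_apply x).symm
    have h3 : e.symm (e x) = (e x).sum fun i m => m ⊗ₜ[k] b i :=
      TensorProduct.equivFinsuppOfBasisRight_symm_apply _ _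
    refine Eq.trans ?_ (h2.trans h3).symm
    simp only [Finsupp.sum, TensorProduct.tmul_sum]
    refine Finset.sum_congr rfl fun i _ => ?_
    rw [← ha, ← TensorProduct.smul_tmul, Algebra.algebraMap_eq_smul_one]
  · rintro ⟨v, rfl⟩ σ
    simp
end

section
/- Let Ω ⊇ k be fields such that k is the fixed field of Γ = Aut(Ω/k), the group of field automorphisms of Ω fixing k pointwise. Let V be a k-vector space, and let Γ act on Ω ⊗ₖ V by σ(c ⊗ v) = σ(c) ⊗ v. Let W be an Ω-subspace of Ω ⊗ₖ V that is stable under the action of Γ. If W ≠ 0, then W contains a nonzero element fixed by every σ ∈ Γ. -/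
open scoped TensorProduct

/-- Let `Ω ⊇ k` be fields such that `k` is the fixed field of `Γ = Aut(Ω/k)`, let
`V` be a `k`-vector space, and let `Γ` act on `Ω ⊗[k] V` by `σ(c ⊗ v) = σ(c) ⊗ v`.
If `W` is a nonzero `Ω`-subspace of `Ω ⊗[k] V` stable under the action of `Γ`,
then `W` contains a nonzero element fixed by every `σ ∈ Γ`. -/
theorem exists_nonzero_fixed_of_stable_submodule
    (k Ω V : Type*) [Field k] [Field Ω] [Algebra k Ω]
    (hk : ∀ a : Ω, (∀ σ : Ω ≃ₐ[k] Ω, σ a = a) → a ∈ Set.range (algebraMap k Ω))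
    [AddCommGroup V] [Module k V]
    (W : Submodule Ω (Ω ⊗[k] V))
    (hstab : ∀ (σ : Ω ≃ₐ[k] Ω), ∀ w ∈ W, LinearMap.rTensor V σ.toLinearMap w ∈ W)
    (hW : W ≠ ⊥) :
    ∃ w ∈ W, w ≠ 0 ∧ ∀ σ : Ω ≃ₐ[k] Ω, LinearMap.rTensor V σ.toLinearMap w = w := by
  classical
  let b := Module.Basis.ofVectorSpace k V
  let B := b.baseChange Ω
  have key : ∀ (σ : Ω ≃ₐ[k] Ω) (w : Ω ⊗[k] V) i,
      B.repr (LinearMap.rTensor V σ.toLinearMap w) i = σ (B.repr w i) := by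
    intro σ w i
    induction w using TensorProduct.induction_on with
    | zero => simp
    | tmul c v => simp [B, Module.Basis.baseChange_repr_tmul]
    | add x y hx hy => simp only [map_add, Finsupp.add_apply, hx, hy]
  have hex : ∃ n : ℕ, ∃ w ∈ W, w ≠ 0 ∧ (B.repr w).support.card = n := by
    obtain ⟨w, hw, h0⟩ := Submodule.exists_mem_ne_zero_of_ne_bot hW
    exact ⟨_, w, hw, h0, rfl⟩
  obtain ⟨w, hw, h0, hc⟩ := Nat.find_spec hex
  have hmin : ∀ u ∈ W, (B.repr u).support.card < (B.repr w).support.card → u = 0 := by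
    intro u hu hlt
    by_contra hne
    rw [hc] at hlt
    exact Nat.find_min hex hlt ⟨u, hu, hne, rfl⟩
  have hr : B.repr w ≠ 0 := by simpa using h0
  obtain ⟨i, hi⟩ := Finsupp.ne_iff.mp hr
  have hi : B.repr w i ≠ 0 := by simpa using hi
  have hinv : (B.repr w i)⁻¹ ≠ 0 := inv_ne_zero hi
  refine ⟨(B.repr w i)⁻¹ • w, W.smul_mem _ hw, smul_ne_zero hinv h0, fun σ => ?_⟩
  rw [← sub_eq_zero]
  refine hmin _ (W.sub_mem (hstab σ _ (W.smul_mem _ hw)) (W.smul_mem _ hw)) ?_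
  apply Finset.card_lt_card
  rw [Finset.ssubset_iff_of_subset]
  · refine ⟨i, by simpa using hi, ?_⟩
    rw [Finsupp.notMem_support_iff, map_sub, Finsupp.sub_apply, key]
    simp [hi]
  · intro j hj
    rw [Finsupp.mem_support_iff] at hj ⊢
    intro h
    apply hj
    rw [map_sub, Finsupp.sub_apply, key]
    simp [h]
end

section
/- Let Ω ⊇ k be fields such that k is the fixed field of Γ = Aut(Ω/k), the group of field automorphisms of Ω fixing k pointwise. Let V be a k-vector space, and let Γ act on Ω ⊗ₖ V by σ(c ⊗ v) = σ(c) ⊗ v. An Ω-subspace W of Ω ⊗ₖ V is stable under the action of Γ if and only if W is the Ω-span of the set {1 ⊗ v | v ∈ V, 1 ⊗ v ∈ W}; equivalently, W = Ω · (1 ⊗ W₀) for the k-subspace W₀ = {v ∈ V | 1 ⊗ v ∈ W} of V. -/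
open scoped TensorProduct

theorem descend_repr_rTensor {k Ω V ι : Type*} [Field k] [Field Ω] [Algebra k Ω]
    [AddCommGroup V] [Module k V] (b : Module.Basis ι k V) (σ : Ω ≃ₐ[k] Ω) (x : Ω ⊗[k] V) (i : ι) :
    (Algebra.TensorProduct.basis Ω b).repr (LinearMap.rTensor V σ.toLinearMap x) i
      = σ ((Algebra.TensorProduct.basis Ω b).repr x i) := by
  induction x using TensorProduct.induction_on with
  | zero => simp
  | tmul c v => simp [Algebra.TensorProduct.basis_repr_tmul]
  | add x y hx hy => simp only [map_add, Finsupp.add_apply, hx, hy]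

theorem descend_fixed {k Ω V ι : Type*} [Field k] [Field Ω] [Algebra k Ω]
    (hk : ∀ a : Ω, (∀ σ : Ω ≃ₐ[k] Ω, σ a = a) → a ∈ Set.range (algebraMap k Ω))
    [AddCommGroup V] [Module k V] (b : Module.Basis ι k V) (x : Ω ⊗[k] V)
    (hx : ∀ σ : Ω ≃ₐ[k] Ω, LinearMap.rTensor V σ.toLinearMap x = x) :
    ∃ v : V, (1 : Ω) ⊗ₜ[k] v = x := by
  have h : ∀ i, ∃ c : k, algebraMap k Ω c = (Algebra.TensorProduct.basis Ω b).repr x i := by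
    intro i
    apply hk
    intro σ
    rw [← descend_repr_rTensor, hx]
  choose c hc using h
  refine ⟨∑ i ∈ ((Algebra.TensorProduct.basis Ω b).repr x).support, c i • b i, ?_⟩
  conv_rhs => rw [← (Algebra.TensorProduct.basis Ω b).linearCombination_repr x]
  rw [Finsupp.linearCombination_apply, Finsupp.sum, TensorProduct.tmul_sum]
  refine Finset.sum_congr rfl fun i _ => ?_
  rw [← hc, Algebra.TensorProduct.basis_apply, algebraMap_smul, TensorProduct.tmul_smul]

theorem descend_exists {k Ω V ι : Type*} [Field k] [Field Ω] [Algebra k Ω]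
    [AddCommGroup V] [Module k V] (b : Module.Basis ι k V) (W : Submodule Ω (Ω ⊗[k] V))
    (hW : ∀ (σ : Ω ≃ₐ[k] Ω), ∀ w ∈ W, LinearMap.rTensor V σ.toLinearMap w ∈ W) (n : ℕ) :
    ∀ w ∈ W, w ≠ 0 → ((Algebra.TensorProduct.basis Ω b).repr w).support.card = n →
    ∃ x ∈ W, x ≠ 0 ∧ (∀ σ : Ω ≃ₐ[k] Ω, LinearMap.rTensor V σ.toLinearMap x = x) ∧
      ((Algebra.TensorProduct.basis Ω b).repr x).support ⊆
        ((Algebra.TensorProduct.basis Ω b).repr w).support := by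
  induction n using Nat.strong_induction_on with
  | _ n ih =>
    intro w hw hw0 hn
    set B := Algebra.TensorProduct.basis Ω b with hB
    obtain ⟨i, hi⟩ : ∃ i, B.repr w i ≠ 0 := by
      by_contra! h
      exact hw0 (B.repr.map_eq_zero_iff.1 (Finsupp.ext h))
    set y := (B.repr w i)⁻¹ • w with hy
    have hyW : y ∈ W := W.smul_mem _ hw
    have hyj : ∀ j, B.repr y j = (B.repr w i)⁻¹ * B.repr w j := by intro j; simp [hy]
    by_cases hf : ∀ σ : Ω ≃ₐ[k] Ω, LinearMap.rTensor V σ.toLinearMap y = y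
    · refine ⟨y, hyW, smul_ne_zero (inv_ne_zero hi) hw0, hf, ?_⟩
      intro j
      simp only [Finsupp.mem_support_iff, hyj]
      exact fun h => right_ne_zero_of_mul h
    · push Not at hf
      obtain ⟨σ, hσ⟩ := hf
      set z := LinearMap.rTensor V σ.toLinearMap y - y with hz
      have hzj : ∀ j, B.repr z j = σ (B.repr y j) - B.repr y j := by
        intro j
        rw [hz, map_sub, Finsupp.sub_apply, hB, descend_repr_rTensor]
      have hsub : (B.repr z).support ⊂ (B.repr w).support := by
        refine (Finset.ssubset_iff_of_subset ?_).2 ⟨i, by simpa using hi, ?_⟩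
        · intro j
          simp only [Finsupp.mem_support_iff]
          intro h h0
          exact h (by rw [hzj, hyj, h0]; simp)
        · rw [Finsupp.notMem_support_iff, hzj, hyj, inv_mul_cancel₀ hi]
          simp
      obtain ⟨x, h1, h2, h3, h4⟩ := ih _ (hn ▸ Finset.card_lt_card hsub) z
        (W.sub_mem (hW σ y hyW) hyW) (sub_ne_zero.2 hσ) rfl
      exact ⟨x, h1, h2, h3, h4.trans hsub.subset⟩

theorem descend_mem_span {k Ω V ι : Type*} [Field k] [Field Ω] [Algebra k Ω]
    (hk : ∀ a : Ω, (∀ σ : Ω ≃ₐ[k] Ω, σ a = a) → a ∈ Set.range (algebraMap k Ω))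
    [AddCommGroup V] [Module k V] (b : Module.Basis ι k V) (W : Submodule Ω (Ω ⊗[k] V))
    (hW : ∀ (σ : Ω ≃ₐ[k] Ω), ∀ w ∈ W, LinearMap.rTensor V σ.toLinearMap w ∈ W) (n : ℕ) :
    ∀ w ∈ W, ((Algebra.TensorProduct.basis Ω b).repr w).support.card = n →
    w ∈ Submodule.span Ω
        ((fun v : V => (1 : Ω) ⊗ₜ[k] v) '' {v : V | (1 : Ω) ⊗ₜ[k] v ∈ W}) := by
  induction n using Nat.strong_induction_on with
  | _ n ih =>
    intro w hw hn
    by_cases hw0 : w = 0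
    · rw [hw0]; exact Submodule.zero_mem _
    obtain ⟨x, hxW, hx0, hxf, hxs⟩ := descend_exists b W hW n w hw hw0 hn
    obtain ⟨v, rfl⟩ := descend_fixed hk b x hxf
    have hxS := Submodule.subset_span (R := Ω) (Set.mem_image_of_mem
      (fun v : V => (1 : Ω) ⊗ₜ[k] v) (show v ∈ {v : V | (1 : Ω) ⊗ₜ[k] v ∈ W} from hxW))
    generalize (1 : Ω) ⊗ₜ[k] v = x at *
    set B := Algebra.TensorProduct.basis Ω b with hB
    obtain ⟨i, hi⟩ : ∃ i, B.repr x i ≠ 0 := by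
      by_contra! h
      exact hx0 (B.repr.map_eq_zero_iff.1 (Finsupp.ext h))
    set a := B.repr w i * (B.repr x i)⁻¹ with ha
    have hzj : ∀ j, B.repr (w - a • x) j = B.repr w j - a * B.repr x j := by intro j; simp
    have hsub : (B.repr (w - a • x)).support ⊂ (B.repr w).support := by
      refine (Finset.ssubset_iff_of_subset ?_).2 ⟨i, hxs (by simpa using hi), ?_⟩
      · intro j hj
        by_contra h
        have h' : j ∉ (B.repr x).support := fun h'' => h (hxs h'')
        rw [Finsupp.notMem_support_iff] at h h'
        rw [Finsupp.mem_support_iff, hzj, h] at hj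
        simp [h'] at hj
      · rw [Finsupp.notMem_support_iff, hzj, ha, mul_assoc, inv_mul_cancel₀ hi]
        simp
    have := ih _ (hn ▸ Finset.card_lt_card hsub) (w - a • x)
      (W.sub_mem hw (W.smul_mem a hxW)) rfl
    have h2 := Submodule.add_mem _ this (Submodule.smul_mem _ a hxS)
    rwa [sub_add_cancel] at h2

/-- Let `Ω ⊇ k` be fields such that `k` is the fixed field of `Γ = Aut(Ω/k)`, let
`V` be a `k`-vector space, and let `Γ` act on `Ω ⊗[k] V` by `σ(c ⊗ v) = σ(c) ⊗ v`.
An `Ω`-subspace `W` of `Ω ⊗[k] V` is stable under the action of `Γ` if and only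
if `W` is the `Ω`-span of the set `{1 ⊗ v | v ∈ V, 1 ⊗ v ∈ W}`. -/
theorem stable_submodule_iff_spanned_by_descended
    (k Ω V : Type*) [Field k] [Field Ω] [Algebra k Ω]
    (hk : ∀ a : Ω, (∀ σ : Ω ≃ₐ[k] Ω, σ a = a) → a ∈ Set.range (algebraMap k Ω))
    [AddCommGroup V] [Module k V]
    (W : Submodule Ω (Ω ⊗[k] V)) :
    (∀ (σ : Ω ≃ₐ[k] Ω), ∀ w ∈ W, LinearMap.rTensor V σ.toLinearMap w ∈ W) ↔
      W = Submodule.span Ω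
        ((fun v : V => (1 : Ω) ⊗ₜ[k] v) '' {v : V | (1 : Ω) ⊗ₜ[k] v ∈ W}) := by
  constructor
  · intro hW
    apply le_antisymm
    · intro w hw
      exact descend_mem_span hk (Module.Basis.ofVectorSpace k V) W hW _ w hw rfl
    · rw [Submodule.span_le]
      rintro _ ⟨v, hv, rfl⟩
      exact hv
  · intro h σ w hw
    rw [h] at hw
    induction hw using Submodule.span_induction with
    | mem x hx =>
      obtain ⟨v, hv, rfl⟩ := hx
      simpa using hv
    | zero => simp
    | add x y _ _ hx hy => rw [map_add]; exact W.add_mem hx hy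
    | smul a x _ hx =>
      have : LinearMap.rTensor V σ.toLinearMap (a • x)
          = σ a • LinearMap.rTensor V σ.toLinearMap x := by
        rename_i hx0; clear hx hx0
        induction x using TensorProduct.induction_on with
        | zero => simp
        | tmul c v => simp [TensorProduct.smul_tmul']
        | add x y hx hy => rw [smul_add, map_add, map_add, smul_add, hx, hy]
      rw [this]
      exact W.smul_mem _ hx
end

section
/- Let Ω be a (possibly infinite) Galois field extension of k with Galois group Γ = Gal(Ω/k). Let V be an Ω-vector space equipped with a semilinear action of Γ, i.e., a group homomorphism ρ from Γ to the group of additive automorphisms of V such that ρ(σ)(c • v) = σ(c) • ρ(σ)(v) for all σ ∈ Γ, c ∈ Ω, v ∈ V. Assume the action is continuous: for every v ∈ V there is an intermediate field L with k ⊆ L ⊆ Ω and L finite-dimensional over k such that ρ(σ)(v) = v for every σ ∈ Γ fixing L pointwise. Let V^Γ = {v ∈ V | ρ(σ)(v) = v for all σ ∈ Γ}, a k-subspace of V. Then the map Ω ⊗ₖ V^Γ → V, c ⊗ v ↦ c • v, is bijective. -/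
open scoped TensorProduct

theorem descent_linearIndependent
    {k Ω V ι : Type*} [Field k] [Field Ω] [Algebra k Ω] [IsGalois k Ω]
    [AddCommGroup V] [Module k V] [Module Ω V] [IsScalarTower k Ω V]
    (r : (Ω ≃ₐ[k] Ω) → V →+ V)
    (hsemi : ∀ (σ : Ω ≃ₐ[k] Ω) (c : Ω) (v : V), r σ (c • v) = σ c • (r σ v))
    (b : ι → V) (hb : LinearIndependent k b) (hfix : ∀ i σ, r σ (b i) = b i) :
    LinearIndependent Ω b := by
  classical
  rw [← linearIndepOn_univ_iff, linearIndepOn_iff_linearIndepOn_finset]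
  intro t _
  induction t using Finset.induction_on with
  | empty => simp
  | insert a s has ih =>
    have ih := ih (by simp)
    rw [Finset.coe_insert, linearIndepOn_insert (mt Finset.mem_coe.1 has)]
    refine ⟨ih, fun ha => ?_⟩
    obtain ⟨c, hc⟩ : ∃ c : ι → Ω, ∑ i ∈ s, c i • b i = b a := by
      rw [Submodule.mem_span_image_finset_iff_exists_fun] at ha
      obtain ⟨c, hc⟩ := ha
      refine ⟨fun i => if h : i ∈ s then c ⟨i, h⟩ else 0, ?_⟩
      rw [← hc, ← Finset.sum_coe_sort s]
      exact Finset.sum_congr rfl fun i _ => by simp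
    have hck : ∀ i ∈ s, ∃ d : k, algebraMap k Ω d = c i := by
      intro i hi
      have : c i ∈ (⊥ : IntermediateField k Ω) := by
        rw [InfiniteGalois.mem_bot_iff_fixed]
        intro σ
        have h1 : ∑ i ∈ s, σ (c i) • b i = b a := by
          rw [← hfix a σ, ← hc, map_sum]
          simp [hsemi, hfix]
        have h2 : ∑ i ∈ s, (σ (c i) - c i) • b i = 0 := by
          simp only [sub_smul, Finset.sum_sub_distrib, h1, hc, sub_self]
        exact sub_eq_zero.1 (linearIndepOn_finset_iff.1 ih _ h2 i hi)
      exact IntermediateField.mem_bot.1 this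
    choose! d hd using hck
    have hd' : ∑ i ∈ s, d i • b i = b a := by
      rw [← hc]
      refine Finset.sum_congr rfl fun i hi => ?_
      rw [← hd i hi, algebraMap_smul]
    have hk := (hb.linearIndepOn (insert a s : Set ι))
    rw [linearIndepOn_insert (mt Finset.mem_coe.1 has)] at hk
    apply hk.2
    rw [← hd']
    exact Submodule.sum_mem _ fun i hi => Submodule.smul_mem _ _
      (Submodule.subset_span ⟨i, hi, rfl⟩)

theorem descent_exists_lift {k Ω : Type*} [Field k] [Field Ω] [Algebra k Ω] [IsGalois k Ω]
    (L : IntermediateField k Ω) (f : L →ₐ[k] Ω) :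
    ∃ σ : Ω ≃ₐ[k] Ω, ∀ x : L, σ x = f x := by
  obtain ⟨φ, hφ⟩ := IntermediateField.exists_algHom_of_splits (F := k) (E := Ω) (K := Ω)
    (fun s => ⟨Algebra.IsIntegral.isIntegral s, Normal.splits inferInstance s⟩) f
  refine ⟨AlgEquiv.ofBijective φ (Algebra.IsAlgebraic.algHom_bijective φ), fun x => ?_⟩
  rw [← hφ]
  rfl

theorem descent_span
    {k Ω V : Type*} [Field k] [Field Ω] [Algebra k Ω] [IsGalois k Ω]
    [AddCommGroup V] [Module Ω V]
    (r : (Ω ≃ₐ[k] Ω) → V →+ V)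
    (hone : ∀ v, r 1 v = v) (hmul : ∀ σ τ v, r (σ * τ) v = r σ (r τ v))
    (hsemi : ∀ (σ : Ω ≃ₐ[k] Ω) (c : Ω) (v : V), r σ (c • v) = σ c • (r σ v))
    (hcont : ∀ v : V, ∃ L : IntermediateField k Ω, FiniteDimensional k L ∧
      ∀ σ : Ω ≃ₐ[k] Ω, (∀ x ∈ L, σ x = x) → r σ v = v) (v : V) :
    v ∈ Submodule.span Ω {w : V | ∀ σ, r σ w = w} := by
  classical
  by_contra hv
  obtain ⟨φ, hφv, hφ⟩ := Submodule.exists_le_ker_of_notMem hv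
  obtain ⟨L, hL, hfix⟩ := hcont v
  choose l hl using descent_exists_lift L
  have huniq : ∀ σ τ : Ω ≃ₐ[k] Ω, (∀ x : L, σ x = τ x) → r σ v = r τ v := by
    intro σ τ h
    have : r (τ⁻¹ * σ) v = v := by
      apply hfix
      intro x hx
      have := h ⟨x, hx⟩
      simp only at this
      rw [AlgEquiv.mul_apply, this, ← AlgEquiv.mul_apply]
      simp
    rw [← this, ← hmul, hmul, ← hmul τ]
    simp [this]
  have hw : ∀ a : L, (∑ f : L →ₐ[k] Ω, f a • r (l f) v) ∈ {w : V | ∀ σ, r σ w = w} := by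
    intro a τ
    rw [map_sum]
    refine Fintype.sum_bijective (fun f : L →ₐ[k] Ω => (τ : Ω →ₐ[k] Ω).comp f) ?_ _ _ ?_
    · refine Finite.injective_iff_bijective.1 fun f g hfg => ?_
      ext x
      exact τ.injective (DFunLike.congr_fun hfg x)
    · intro f
      rw [hsemi, ← hmul]
      congr 1
      apply huniq
      intro x
      rw [hl, AlgEquiv.mul_apply, hl]
      rfl
  have hind : LinearIndependent Ω (fun f : L →ₐ[k] Ω => (f : L → Ω)) :=
    (linearIndependent_monoidHom L Ω).comp (fun f : L →ₐ[k] Ω => (f : L →* Ω))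
      (fun f g h => by ext x; exact DFunLike.congr_fun h x)
  have hz := Fintype.linearIndependent_iff.1 hind (fun f => φ (r (l f) v)) (by
    funext a
    have := hφ (Submodule.subset_span (hw a))
    rw [LinearMap.mem_ker, map_sum] at this
    simpa [mul_comm] using this) L.val
  apply hφv
  have := huniq (l L.val) 1 (fun x => by rw [hl]; rfl)
  rw [this, hone] at hz
  exact hz

/-- Let `Ω` be a (possibly infinite) Galois extension of `k` with Galois group
`Γ`, and let `V` be an `Ω`-vector space with a continuous semilinear action
`ρ` of `Γ`.  Then the canonical map `Ω ⊗[k] V^Γ → V`, `c ⊗ v ↦ c • v`, is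
bijective, where `V^Γ` is the `k`-subspace of vectors fixed by all `ρ(σ)`. -/
theorem bijective_expansionMap_fixedPoints_of_semilinear
    (k Ω V : Type*) [Field k] [Field Ω] [Algebra k Ω] [IsGalois k Ω]
    [AddCommGroup V] [Module k V] [Module Ω V] [IsScalarTower k Ω V]
    (ρ : (Ω ≃ₐ[k] Ω) →* Multiplicative (AddAut V))
    (hsemi : ∀ (σ : Ω ≃ₐ[k] Ω) (c : Ω) (v : V), ρ σ (c • v) = σ c • (ρ σ v))
    (hcont : ∀ v : V, ∃ L : IntermediateField k Ω, FiniteDimensional k L ∧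
      ∀ σ : Ω ≃ₐ[k] Ω, (∀ x ∈ L, σ x = x) → ρ σ v = v)
    (F : Submodule k V) (hF : ∀ v : V, v ∈ F ↔ ∀ σ : Ω ≃ₐ[k] Ω, ρ σ v = v) :
    Function.Bijective (Submodule.expansionMap k Ω V F) := by
  classical
  let r : (Ω ≃ₐ[k] Ω) → V →+ V := fun σ => ((ρ σ).toAdd : V ≃+ V).toAddMonoidHom
  have hone : ∀ v, r 1 v = v := fun v => by
    change (ρ 1).toAdd v = v
    rw [map_one]; rfl
  have hmul : ∀ σ τ v, r (σ * τ) v = r σ (r τ v) := fun σ τ v => by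
    change (ρ (σ * τ)).toAdd v = _
    rw [map_mul]; rfl
  have happ : ∀ c (w : F), Submodule.expansionMap k Ω V F (c ⊗ₜ w) = c • (w : V) :=
    fun c w => rfl
  let b := Module.Basis.ofVectorSpace k F
  let B := Algebra.TensorProduct.basis Ω b
  have hli : LinearIndependent Ω (fun i => (b i : V)) :=
    descent_linearIndependent r hsemi _
      (b.linearIndependent.map' F.subtype F.ker_subtype)
      (fun i σ => (hF _).1 (b i).2 σ)
  have hsm : ∀ (c : Ω) (x : Ω ⊗[k] F), Submodule.expansionMap k Ω V F (c • x) =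
      c • Submodule.expansionMap k Ω V F x := by
    intro c x
    induction x with
    | zero => simp
    | add x y hx hy => rw [smul_add, map_add, map_add, hx, hy, smul_add]
    | tmul d w => rw [TensorProduct.smul_tmul', happ, happ, smul_assoc]
  let E : (Ω ⊗[k] F) →ₗ[Ω] V :=
    { toFun := Submodule.expansionMap k Ω V F
      map_add' := map_add _
      map_smul' := hsm }
  change Function.Bijective E
  constructor
  · have hE : E = (Finsupp.linearCombination Ω (fun i => (b i : V))).comp
        B.repr.toLinearMap := by
      refine B.ext fun i => ?_
      have : E (B i) = (b i : V) := by
        rw [Algebra.TensorProduct.basis_apply]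
        exact (happ _ _).trans (one_smul _ _)
      rw [this]
      simp
    rw [hE, LinearMap.coe_comp]
    exact Function.Injective.comp hli B.repr.injective
  · rw [← LinearMap.range_eq_top, eq_top_iff]
    intro v _
    refine Submodule.span_le.2 ?_ (descent_span r hone hmul hsemi hcont v)
    intro w hw
    exact ⟨1 ⊗ₜ ⟨w, (hF w).2 hw⟩, (happ _ _).trans (one_smul _ _)⟩
end

section
/- Let V be a scheme that is separated and of finite type over a field k, and let Ω be a field extension of k. Let W₁ and W₂ be closed subschemes of V (given by closed immersions ι₁ : W₁ → V and ι₂ : W₂ → V over k). If the base changes of W₁ and W₂ to Ω define the same closed subscheme of V ×_{Spec k} Spec Ω (i.e., there is an isomorphism W₁ ×_{Spec k} Spec Ω ≅ W₂ ×_{Spec k} Spec Ω commuting with the base-changed closed immersions into V ×_{Spec k} Spec Ω), then W₁ and W₂ are the same closed subscheme of V (there is an isomorphism W₁ ≅ W₂ commuting with ι₁ and ι₂). -/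
open AlgebraicGeometry CategoryTheory CategoryTheory.Limits

theorem exists_lift_aux {S T V W₁ W₂ : Scheme.{u}} (f : V ⟶ S) (g : T ⟶ S)
    [Flat g] [Surjective g] [QuasiCompact g]
    (ι₁ : W₁ ⟶ V) (ι₂ : W₂ ⟶ V) [IsClosedImmersion ι₂]
    (e : pullback (ι₁ ≫ f) g ⟶ pullback (ι₂ ≫ f) g)
    (he : e ≫ pullback.map (ι₂ ≫ f) g f g ι₂ (𝟙 _) (𝟙 _) (by simp) (by simp) =
      pullback.map (ι₁ ≫ f) g f g ι₁ (𝟙 _) (𝟙 _) (by simp) (by simp)) :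
    ∃ a : W₁ ⟶ W₂, a ≫ ι₂ = ι₁ := by
  have sq : CommSq (e ≫ pullback.fst (ι₂ ≫ f) g) (pullback.fst (ι₁ ≫ f) g) ι₂ ι₁ := by
    constructor
    have := congr($he ≫ pullback.fst f g)
    simp only [pullback.map, Category.assoc, pullback.lift_fst] at this
    rw [Category.assoc]
    exact this
  have : EffectiveEpi (pullback.fst (ι₁ ≫ f) g) := inferInstance
  have : StrongEpi (pullback.fst (ι₁ ≫ f) g) := inferInstance
  have : Mono ι₂ := inferInstance
  have : sq.HasLift := inferInstance
  exact ⟨sq.lift, sq.fac_right⟩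

/-- Let `V` be an algebraic scheme (separated and of finite type) over a field
`k` and let `Ω` be a field extension of `k`.  If two closed subschemes
`ι₁ : W₁ ⟶ V`, `ι₂ : W₂ ⟶ V` of `V` become the same closed subscheme of
`V ×_{Spec k} Spec Ω` after base change to `Ω`, then they are the same closed
subscheme of `V`. -/
theorem closedSubscheme_eq_of_baseChange_eq
    {k Ω : Type u} [Field k] [Field Ω] [Algebra k Ω]
    (V W₁ W₂ : Scheme.{u}) (f : V ⟶ Spec (CommRingCat.of k))
    [IsSeparated f] [LocallyOfFiniteType f] [QuasiCompact f]
    (ι₁ : W₁ ⟶ V) (ι₂ : W₂ ⟶ V) [IsClosedImmersion ι₁] [IsClosedImmersion ι₂]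
    (e : pullback (ι₁ ≫ f) (Spec.map (CommRingCat.ofHom (algebraMap k Ω))) ≅
         pullback (ι₂ ≫ f) (Spec.map (CommRingCat.ofHom (algebraMap k Ω))))
    (he : e.hom ≫
        pullback.map (ι₂ ≫ f) (Spec.map (CommRingCat.ofHom (algebraMap k Ω)))
          f (Spec.map (CommRingCat.ofHom (algebraMap k Ω)))
          ι₂ (𝟙 _) (𝟙 _) (by simp) (by simp) =
      pullback.map (ι₁ ≫ f) (Spec.map (CommRingCat.ofHom (algebraMap k Ω)))
          f (Spec.map (CommRingCat.ofHom (algebraMap k Ω)))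
          ι₁ (𝟙 _) (𝟙 _) (by simp) (by simp)) :
    ∃ e₀ : W₁ ≅ W₂, e₀.hom ≫ ι₂ = ι₁ := by
  have : Flat (Spec.map (CommRingCat.ofHom (algebraMap k Ω))) := by
    rw [Flat.SpecMap_iff]
    simp only [CommRingCat.hom_ofHom, RingHom.flat_algebraMap_iff]
    infer_instance
  have : Surjective (Spec.map (CommRingCat.ofHom (algebraMap k Ω))) :=
    ⟨fun x => ⟨(⊥ : PrimeSpectrum Ω), Subsingleton.elim (α := PrimeSpectrum k) _ _⟩⟩
  obtain ⟨a, ha⟩ := exists_lift_aux f _ ι₁ ι₂ e.hom he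
  obtain ⟨b, hb⟩ := exists_lift_aux f _ ι₂ ι₁ e.inv (by rw [← he, e.inv_hom_id_assoc])
  refine ⟨⟨a, b, ?_, ?_⟩, ha⟩
  · rw [← cancel_mono ι₁, Category.assoc, hb, ha, Category.id_comp]
  · rw [← cancel_mono ι₂, Category.assoc, ha, hb, Category.id_comp]
end

section
/- Let k be an algebraically closed field, and let V and W be schemes that are separated and of finite type over k. Let K be a field extension of k. If V ×_{Spec k} Spec K and W ×_{Spec k} Spec K are isomorphic as K-schemes, then V and W are isomorphic as k-schemes. -/
open AlgebraicGeometry CategoryTheory CategoryTheory.Limits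

universe u

namespace DescentAux

section Generic

attribute [-instance] CategoryTheory.catToReflQuiver

variable {I : Type u} [Category.{u} I] {S V W : Scheme.{u}} (T : I ⥤ Scheme.{u})
  (t : ∀ i, T.obj i ⟶ S) (ht : ∀ {i j : I} (a : i ⟶ j), T.map a ≫ t j = t i)
  (f : V ⟶ S) (g : W ⟶ S) (c : Cone T) (p : c.pt ⟶ S)
  (hp : ∀ i, c.π.app i ≫ t i = p)

include ht in
lemma D_aux {i j : I} (a : i ⟶ j) : pullback.fst f (t i) ≫ f =
    (pullback.snd f (t i) ≫ T.map a) ≫ t j := by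
  rw [Category.assoc, ht, pullback.condition]

/-- The base change diagram. -/
noncomputable def D : I ⥤ Scheme.{u} where
  obj i := pullback f (t i)
  map {i j} a := pullback.lift (pullback.fst f (t i)) (pullback.snd f (t i) ≫ T.map a)
    (D_aux T t ht f a)
  map_id i := by
    apply pullback.hom_ext <;> simp
  map_comp a b := by
    apply pullback.hom_ext
    · rw [pullback.lift_fst, Category.assoc, pullback.lift_fst, pullback.lift_fst]
    · rw [pullback.lift_snd, Category.assoc, pullback.lift_snd, pullback.lift_snd_assoc,
        Functor.map_comp, Category.assoc]

/-- first projection -/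
noncomputable def p₁ (i : I) : (D T t ht f).obj i ⟶ V := pullback.fst f (t i)
/-- second projection -/
noncomputable def p₂ (i : I) : (D T t ht f).obj i ⟶ T.obj i := pullback.snd f (t i)

lemma cond (i : I) : p₁ T t ht f i ≫ f = p₂ T t ht f i ≫ t i := pullback.condition

/-- lift -/
noncomputable def lft {i : I} {Z : Scheme.{u}} (x : Z ⟶ V) (y : Z ⟶ T.obj i) (h : x ≫ f = y ≫ t i) :
    Z ⟶ (D T t ht f).obj i := pullback.lift x y h

@[simp]
lemma lft_p₁ {i : I} {Z : Scheme.{u}} (x : Z ⟶ V) (y : Z ⟶ T.obj i) (h : x ≫ f = y ≫ t i) :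
    lft T t ht f x y h ≫ p₁ T t ht f i = x := pullback.lift_fst _ _ _

@[simp]
lemma lft_p₂ {i : I} {Z : Scheme.{u}} (x : Z ⟶ V) (y : Z ⟶ T.obj i) (h : x ≫ f = y ≫ t i) :
    lft T t ht f x y h ≫ p₂ T t ht f i = y := pullback.lift_snd _ _ _

@[simp]
lemma lft_p₁_assoc {i : I} {Z : Scheme.{u}} (x : Z ⟶ V) (y : Z ⟶ T.obj i) (h : x ≫ f = y ≫ t i) {Y : Scheme.{u}}
    (q : V ⟶ Y) : lft T t ht f x y h ≫ p₁ T t ht f i ≫ q = x ≫ q := by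
  rw [← Category.assoc, lft_p₁]

@[simp]
lemma lft_p₂_assoc {i : I} {Z : Scheme.{u}} (x : Z ⟶ V) (y : Z ⟶ T.obj i) (h : x ≫ f = y ≫ t i) {Y : Scheme.{u}}
    (q : T.obj i ⟶ Y) : lft T t ht f x y h ≫ p₂ T t ht f i ≫ q = y ≫ q := by
  rw [← Category.assoc, lft_p₂]

lemma D_ext {i : I} {Z : Scheme.{u}} {x y : Z ⟶ (D T t ht f).obj i}
    (h₁ : x ≫ p₁ T t ht f i = y ≫ p₁ T t ht f i)
    (h₂ : x ≫ p₂ T t ht f i = y ≫ p₂ T t ht f i) : x = y :=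
  pullback.hom_ext h₁ h₂

@[simp]
lemma D_p₁ {i j : I} (a : i ⟶ j) :
    (D T t ht f).map a ≫ p₁ T t ht f j = p₁ T t ht f i :=
  pullback.lift_fst _ _ _

@[simp]
lemma D_p₂ {i j : I} (a : i ⟶ j) :
    (D T t ht f).map a ≫ p₂ T t ht f j = p₂ T t ht f i ≫ T.map a :=
  pullback.lift_snd _ _ _

@[simp]
lemma D_p₁_assoc {i j : I} (a : i ⟶ j) {Y : Scheme.{u}} (q : V ⟶ Y) :
    (D T t ht f).map a ≫ p₁ T t ht f j ≫ q = p₁ T t ht f i ≫ q := by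
  rw [← Category.assoc, D_p₁]

@[simp]
lemma D_p₂_assoc {i j : I} (a : i ⟶ j) {Y : Scheme.{u}} (q : T.obj j ⟶ Y) :
    (D T t ht f).map a ≫ p₂ T t ht f j ≫ q = p₂ T t ht f i ≫ T.map a ≫ q := by
  rw [← Category.assoc, D_p₂, Category.assoc]

/-- structure map -/
noncomputable def Dt : D T t ht f ⟶ (Functor.const I).obj S where
  app i := p₁ T t ht f i ≫ f
  naturality i j a := by
    have := D_p₁_assoc T t ht f a f
    exact this.trans (Category.comp_id _).symm

include hp in
lemma cone_aux (i : I) : pullback.fst f p ≫ f =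
    (pullback.snd f p ≫ c.π.app i) ≫ t i := by
  have := hp i
  rw [pullback.condition, ← this]
  exact (Category.assoc _ _ _).symm

/-- cone maps -/
noncomputable def π (i : I) : pullback f p ⟶ (D T t ht f).obj i :=
  lft T t ht f (pullback.fst f p) (pullback.snd f p ≫ c.π.app i) (cone_aux T t f c p hp i)

@[simp]
lemma π_p₁ (i : I) : π T t ht f c p hp i ≫ p₁ T t ht f i = pullback.fst f p :=
  pullback.lift_fst _ _ _

@[simp]
lemma π_p₂ (i : I) : π T t ht f c p hp i ≫ p₂ T t ht f i = pullback.snd f p ≫ c.π.app i :=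
  pullback.lift_snd _ _ _

@[simp]
lemma π_p₁_assoc (i : I) {Y : Scheme.{u}} (q : V ⟶ Y) :
    π T t ht f c p hp i ≫ p₁ T t ht f i ≫ q = pullback.fst f p ≫ q := by
  rw [← Category.assoc, π_p₁]

@[simp]
lemma π_p₂_assoc (i : I) {Y : Scheme.{u}} (q : T.obj i ⟶ Y) :
    π T t ht f c p hp i ≫ p₂ T t ht f i ≫ q = pullback.snd f p ≫ c.π.app i ≫ q := by
  rw [← Category.assoc, π_p₂]
  exact Category.assoc _ _ _

@[simp]
lemma π_map {i j : I} (a : i ⟶ j) :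
    π T t ht f c p hp i ≫ (D T t ht f).map a = π T t ht f c p hp j := by
  apply D_ext
  · rw [Category.assoc, D_p₁, π_p₁, π_p₁]
  · rw [Category.assoc, D_p₂, π_p₂_assoc, π_p₂, ← c.w a]

@[simp]
lemma π_map_assoc {i j : I} (a : i ⟶ j) {Y : Scheme.{u}} (q : (D T t ht f).obj j ⟶ Y) :
    π T t ht f c p hp i ≫ (D T t ht f).map a ≫ q = π T t ht f c p hp j ≫ q := by
  rw [← Category.assoc, π_map]

/-- the cone -/
noncomputable def Dc : Cone (D T t ht f) where
  pt := pullback f p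
  π :=
    { app i := π T t ht f c p hp i
      naturality i j a := (Category.id_comp _).trans (π_map T t ht f c p hp a).symm }

lemma fst_indep [IsCofiltered I] (s : Cone (D T t ht f)) (i j : I) :
    s.π.app i ≫ p₁ T t ht f i = s.π.app j ≫ p₁ T t ht f j := by
  rw [← s.w (IsCofiltered.minToLeft i j), ← s.w (IsCofiltered.minToRight i j)]
  rw [Category.assoc, D_p₁, Category.assoc, D_p₁]

/-- projected cone -/
noncomputable def sndCone (s : Cone (D T t ht f)) : Cone T where
  pt := s.pt
  π :=
    { app i := s.π.app i ≫ p₂ T t ht f i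
      naturality i j a := by
        have h := s.w a
        refine (Category.id_comp _).trans ?_
        rw [← h, Category.assoc, D_p₂, Category.assoc] }

lemma exists_lift [IsCofiltered I] (hc : IsLimit c) (s : Cone (D T t ht f)) :
    ∃ l : s.pt ⟶ pullback f p, ∀ i, l ≫ π T t ht f c p hp i = s.π.app i := by
  let i₀ : I := IsCofiltered.nonempty.some
  have h0 : (s.π.app i₀ ≫ p₁ T t ht f i₀) ≫ f = hc.lift (sndCone T t ht f s) ≫ p := by
    have h := hc.fac (sndCone T t ht f s) i₀
    have h' : (hc.lift (sndCone T t ht f s) ≫ c.π.app i₀) ≫ t i₀ = _ := congrArg (· ≫ t i₀) h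
    refine Eq.trans ?_ (h'.symm.trans ((Category.assoc _ _ _).trans (congrArg _ (hp i₀))))
    refine (Category.assoc _ _ _).trans ?_
    rw [cond]
    exact (Category.assoc _ _ _).symm
  refine ⟨pullback.lift _ _ h0, fun i ↦ D_ext _ _ _ _ ?_ ?_⟩
  · rw [Category.assoc, π_p₁]
    refine (pullback.lift_fst _ _ _).trans (fst_indep ..)
  · rw [Category.assoc, π_p₂]
    refine (pullback.lift_snd_assoc _ _ _ _).trans (hc.fac _ _)

lemma hom_ext_lim (hc : IsLimit c) [IsCofiltered I] {Z : Scheme.{u}} (x y : Z ⟶ pullback f p)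
    (h : ∀ i, x ≫ π T t ht f c p hp i = y ≫ π T t ht f c p hp i) : x = y := by
  apply pullback.hom_ext
  · have := h IsCofiltered.nonempty.some
    rw [← π_p₁ T t ht f c p hp IsCofiltered.nonempty.some, reassoc_of% this]
  · apply hc.hom_ext
    intro i
    have := congrArg (· ≫ p₂ T t ht f i) (h i)
    simp only [Category.assoc, π_p₂] at this
    exact (Category.assoc _ _ _).trans (this.trans (Category.assoc _ _ _).symm)

/-- it is a limit -/
noncomputable def DcLim [IsCofiltered I] (hc : IsLimit c) : IsLimit (Dc T t ht f c p hp) where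
  lift s := (exists_lift T t ht f c p hp hc s).choose
  fac s i := (exists_lift T t ht f c p hp hc s).choose_spec i
  uniq s m hm := hom_ext_lim T t ht f c p hp hc _ _ fun i ↦
    (hm i).trans ((exists_lift T t ht f c p hp hc s).choose_spec i).symm

lemma isPb (i : I) : IsPullback (p₁ T t ht f i) (p₂ T t ht f i) f (t i) :=
  IsPullback.of_hasPullback f (t i)

instance affD [∀ i, IsAffine (T.obj i)] {i j : I} (a : i ⟶ j) :
    IsAffineHom ((D T t ht f).map a) := by
  have h : IsPullback ((D T t ht f).map a) (p₂ T t ht f i) (p₂ T t ht f j) (T.map a) := by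
    refine IsPullback.of_right (h₁₂ := p₁ T t ht f j) (h₂₂ := t j) (v₁₃ := f) ?_ (D_p₂ ..)
      (isPb T t ht f j).flip.flip
    rw [ht, D_p₁]
    exact (isPb T t ht f i).flip.flip
  exact MorphismProperty.of_isPullback (P := @IsAffineHom) h.flip inferInstance

instance cpt [∀ i, IsAffine (T.obj i)] [QuasiCompact f] (i : I) :
    CompactSpace ((D T t ht f).obj i) :=
  have : CompactSpace (pullback f (t i) : Scheme.{u}) :=
    QuasiCompact.compactSpace_of_compactSpace (pullback.snd f (t i))
  this

instance qs [∀ i, IsAffine (T.obj i)] [QuasiSeparated f] (i : I) :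
    QuasiSeparatedSpace ((D T t ht f).obj i) :=
  have : QuasiSeparatedSpace (pullback f (t i) : Scheme.{u}) :=
    quasiSeparatedSpace_of_quasiSeparated (pullback.snd f (t i))
  this

/-- a morphism over the limit descends -/
lemma exists_desc [IsCofiltered I] [∀ i, IsAffine (T.obj i)] [QuasiCompact f] [QuasiSeparated f]
    [LocallyOfFinitePresentation g] (hc : IsLimit c)
    (a : pullback f p ⟶ W) (ha : a ≫ g = pullback.fst f p ≫ f) :
    ∃ (i : I) (b : (D T t ht f).obj i ⟶ W), π T t ht f c p hp i ≫ b = a ∧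
      b ≫ g = p₁ T t ht f i ≫ f := by
  refine Scheme.exists_π_app_comp_eq_of_locallyOfFinitePresentation (D T t ht f) (Dt T t ht f) g
    (Dc T t ht f c p hp) (DcLim T t ht f c p hp hc) a ?_
  ext i : 2
  exact (π_p₁_assoc T t ht f c p hp i f).trans ha.symm

/-- equality over the limit descends -/
lemma exists_eq [IsCofiltered I] [∀ i, IsAffine (T.obj i)] [QuasiCompact f]
    [LocallyOfFiniteType g] (hc : IsLimit c) (i : I)
    (a b : (D T t ht f).obj i ⟶ W) (ha : a ≫ g = p₁ T t ht f i ≫ f)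
    (hb : b ≫ g = p₁ T t ht f i ≫ f)
    (hab : π T t ht f c p hp i ≫ a = π T t ht f c p hp i ≫ b) :
    ∃ (j : I) (m : j ⟶ i), (D T t ht f).map m ≫ a = (D T t ht f).map m ≫ b :=
  Scheme.exists_hom_comp_eq_comp_of_locallyOfFiniteType (D T t ht f) (Dt T t ht f) g
    (Dc T t ht f c p hp) (DcLim T t ht f c p hp hc) a b ha.symm hb.symm hab

lemma π_lift {i : I} (b : (D T t ht f).obj i ⟶ W) (hb : b ≫ g = p₂ T t ht f i ≫ t i)
    (e : pullback f p ⟶ pullback g p) (he : e ≫ pullback.snd g p = pullback.snd f p)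
    (h : π T t ht f c p hp i ≫ b = e ≫ pullback.fst g p) :
    π T t ht f c p hp i ≫ lft T t ht g b (p₂ T t ht f i) hb = e ≫ π T t ht g c p hp i := by
  apply D_ext
  · rw [Category.assoc, lft_p₁, Category.assoc, π_p₁, h]
  · rw [Category.assoc, lft_p₂, Category.assoc, π_p₂, π_p₂, reassoc_of% he]

lemma D_lift {i j : I} (m : j ⟶ i) (b : (D T t ht f).obj i ⟶ W)
    (hb : b ≫ g = p₂ T t ht f i ≫ t i)
    (hb' : ((D T t ht f).map m ≫ b) ≫ g = p₂ T t ht f j ≫ t j) :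
    lft T t ht g ((D T t ht f).map m ≫ b) (p₂ T t ht f j) hb' ≫ (D T t ht g).map m =
     (D T t ht f).map m ≫ lft T t ht g b (p₂ T t ht f i) hb := by
  apply D_ext
  · simp
  · simp

include hp in
lemma exists_stage [IsCofiltered I] [∀ i, IsAffine (T.obj i)] [QuasiCompact f] [QuasiSeparated f]
    [LocallyOfFinitePresentation f] [QuasiCompact g] [QuasiSeparated g]
    [LocallyOfFinitePresentation g] (hc : IsLimit c)
    (e : pullback f p ≅ pullback g p) (he : e.hom ≫ pullback.snd g p = pullback.snd f p) :
    ∃ (i : I) (a : (D T t ht f).obj i ⟶ W) (b : (D T t ht g).obj i ⟶ V)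
      (ha : a ≫ g = p₂ T t ht f i ≫ t i)
      (hb : b ≫ f = p₂ T t ht g i ≫ t i),
      lft T t ht g a (p₂ T t ht f i) ha ≫ b = p₁ T t ht f i ∧
      lft T t ht f b (p₂ T t ht g i) hb ≫ a = p₁ T t ht g i := by
  have he' : e.inv ≫ pullback.snd f p = pullback.snd g p := by rw [← he, e.inv_hom_id_assoc]
  obtain ⟨i₁, a₁, ha₁, ha₁'⟩ := exists_desc T t ht f g c p hp hc (e.hom ≫ pullback.fst g p)
    (by rw [Category.assoc, pullback.condition, reassoc_of% he, pullback.condition])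
  obtain ⟨i₂, b₂, hb₂, hb₂'⟩ := exists_desc T t ht g f c p hp hc (e.inv ≫ pullback.fst f p)
    (by rw [Category.assoc, pullback.condition, reassoc_of% he', pullback.condition])
  obtain ⟨i, m₁, m₂, -⟩ := IsCofilteredOrEmpty.cone_objs i₁ i₂
  obtain ⟨a, ha, ha'⟩ : ∃ a : (D T t ht f).obj i ⟶ W, π T t ht f c p hp i ≫ a =
      e.hom ≫ pullback.fst g p ∧ a ≫ g = p₂ T t ht f i ≫ t i := by
    refine ⟨(D T t ht f).map m₁ ≫ a₁, ?_, ?_⟩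
    · rw [← ha₁, π_map_assoc]
    · rw [Category.assoc, ha₁', D_p₁_assoc, cond]
  obtain ⟨b, hb, hb'⟩ : ∃ b : (D T t ht g).obj i ⟶ V, π T t ht g c p hp i ≫ b =
      e.inv ≫ pullback.fst f p ∧ b ≫ f = p₂ T t ht g i ≫ t i := by
    refine ⟨(D T t ht g).map m₂ ≫ b₂, ?_, ?_⟩
    · rw [← hb₂, π_map_assoc]
    · rw [Category.assoc, hb₂', D_p₁_assoc, cond]
  clear ha₁ hb₂ ha₁' hb₂'
  have hla := π_lift T t ht f g c p hp a ha' e.hom he ha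
  have hlb := π_lift T t ht g f c p hp b hb' e.inv he' hb
  obtain ⟨j₁, n₁, h₁⟩ := exists_eq T t ht f f c p hp hc i
    (lft T t ht g a (p₂ T t ht f i) ha' ≫ b)
    (p₁ T t ht f i) (by rw [Category.assoc, hb', lft_p₂_assoc, cond]) rfl
    (by rw [reassoc_of% hla, hb, e.hom_inv_id_assoc, π_p₁])
  obtain ⟨j₂, n₂, h₂⟩ := exists_eq T t ht g g c p hp hc i
    (lft T t ht f b (p₂ T t ht g i) hb' ≫ a)
    (p₁ T t ht g i) (by rw [Category.assoc, ha', lft_p₂_assoc, cond]) rfl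
    (by rw [reassoc_of% hlb, ha, e.inv_hom_id_assoc, π_p₁])
  obtain ⟨j, q₁, q₂, hq⟩ := IsCofiltered.cospan n₁ n₂
  have ha2 : ((D T t ht f).map (q₁ ≫ n₁) ≫ a) ≫ g = p₂ T t ht f j ≫ t j := by
    rw [Category.assoc, ha', D_p₂_assoc, ht]
  have hb2 : ((D T t ht g).map (q₁ ≫ n₁) ≫ b) ≫ f = p₂ T t ht g j ≫ t j := by
    rw [Category.assoc, hb', D_p₂_assoc, ht]
  refine ⟨j, (D T t ht f).map (q₁ ≫ n₁) ≫ a, (D T t ht g).map (q₁ ≫ n₁) ≫ b, ha2, hb2, ?_, ?_⟩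
  · have := D_lift T t ht f g (q₁ ≫ n₁) a ha' ha2
    rw [reassoc_of% this, Functor.map_comp, Category.assoc, h₁]
    simp
  · have := D_lift T t ht g f (q₁ ≫ n₁) b hb' hb2
    rw [reassoc_of% this, hq, Functor.map_comp, Category.assoc, h₂]
    simp

lemma specialize {S Z V W : Scheme.{u}} (f : V ⟶ S) (g : W ⟶ S) (q : Z ⟶ S) (s : S ⟶ Z)
    (hs : s ≫ q = 𝟙 S) (a : pullback f q ⟶ W) (b : pullback g q ⟶ V)
    (ha : a ≫ g = pullback.snd f q ≫ q) (hb : b ≫ f = pullback.snd g q ≫ q)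
    (h₁ : pullback.lift a (pullback.snd f q) ha ≫ b = pullback.fst f q)
    (h₂ : pullback.lift b (pullback.snd g q) hb ≫ a = pullback.fst g q) :
    ∃ e₀ : V ≅ W, e₀.hom ≫ g = f := by
  have key {V W : Scheme.{u}} (f : V ⟶ S) (g : W ⟶ S) (a : pullback f q ⟶ W)
      (b : pullback g q ⟶ V) (ha : a ≫ g = pullback.snd f q ≫ q)
      (h₁ : pullback.lift a (pullback.snd f q) ha ≫ b = pullback.fst f q) :
      (pullback.lift (𝟙 V) (f ≫ s) (by simp [hs]) ≫ a) ≫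
        (pullback.lift (𝟙 W) (g ≫ s) (by simp [hs]) ≫ b) = 𝟙 V := by
    have : (pullback.lift (𝟙 V) (f ≫ s) (by simp [hs]) ≫ a) ≫
        (pullback.lift (𝟙 W) (g ≫ s) (by simp [hs])) =
        pullback.lift (𝟙 V) (f ≫ s) (by simp [hs]) ≫
          pullback.lift a (pullback.snd f q) ha := by
      apply pullback.hom_ext
      · rw [Category.assoc, pullback.lift_fst, Category.comp_id]
        refine Eq.trans ?_ (Category.assoc _ _ _).symm
        rw [pullback.lift_fst]
      · rw [Category.assoc, pullback.lift_snd]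
        refine (Category.assoc _ _ _).trans (Eq.trans ?_ (Category.assoc _ _ _).symm)
        rw [pullback.lift_snd, pullback.lift_snd, reassoc_of% ha, pullback.lift_snd_assoc,
          Category.assoc, reassoc_of% hs]
    rw [← Category.assoc, this, Category.assoc, h₁, pullback.lift_fst]
  refine ⟨⟨_, _, key f g a b ha h₁, key g f b a hb h₂⟩, ?_⟩
  change (pullback.lift (𝟙 V) (f ≫ s) _ ≫ a) ≫ g = f
  rw [Category.assoc, ha, pullback.lift_snd_assoc, Category.assoc, hs, Category.comp_id]

end Generic

section FG

variable (k K : Type u) [Field k] [Field K] [Algebra k K]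

/-- fg subalgebras -/
abbrev J := {A : Subalgebra k K // A.FG}

instance : IsDirectedOrder (J k K) :=
  ⟨fun A B ↦ ⟨⟨A.1 ⊔ B.1, A.2.sup B.2⟩, le_sup_left (a := A.1), le_sup_right (a := A.1)⟩⟩

instance : Nonempty (J k K) := ⟨⟨⊥, Subalgebra.fg_bot⟩⟩

/-- the ring diagram -/
def R : J k K ⥤ CommRingCat.{u} where
  obj A := CommRingCat.of A.1
  map {A B} h := CommRingCat.ofHom (Subalgebra.inclusion (leOfHom h)).toRingHom

/-- the cocone -/
def Rc : Cocone (R k K) where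
  pt := CommRingCat.of K
  ι := { app A := CommRingCat.ofHom A.1.val.toRingHom }

/-- it is colimiting -/
noncomputable def RcColim : IsColimit (Rc k K) := by
  have : ReflectsColimitsOfShape (J k K) (forget CommRingCat.{u}) :=
    reflectsColimitsOfShape_of_reflectsIsomorphisms
  refine isColimitOfReflects (forget CommRingCat.{u}) ?_
  refine Types.FilteredColimit.isColimitOf' _ _ ?_ ?_
  · intro (x : K)
    exact ⟨⟨Algebra.adjoin k {x}, ⟨{x}, by rw [Finset.coe_singleton]⟩⟩,
      ⟨x, Algebra.self_mem_adjoin_singleton k x⟩, rfl⟩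
  · intro i x y h
    exact ⟨i, 𝟙 i, congrArg _ (Subtype.ext h)⟩

/-- structure maps -/
def tR : (Functor.const (J k K)).obj (CommRingCat.of k) ⟶ R k K where
  app A := CommRingCat.ofHom (algebraMap k A.1)

lemma exists_hom (k L : Type u) [Field k] [Field L] [Algebra k L] [IsAlgClosed k]
    [Module.Finite k L] : Nonempty (L →ₐ[k] k) := ⟨IsAlgClosed.lift⟩

lemma exists_point [IsAlgClosed k] (A : J k K) : ∃ s : A.1 →+* k, s.comp (algebraMap k A.1) = .id k := by
  have : Algebra.FiniteType k A.1 := A.1.fg_iff_finiteType.mp A.2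
  obtain ⟨m, hm⟩ := Ideal.exists_maximal A.1
  let := Ideal.Quotient.field m
  have : Module.Finite k (A.1 ⧸ m) := finite_of_finite_type_of_isJacobsonRing k (A.1 ⧸ m)
  obtain ⟨φ⟩ := exists_hom k (A.1 ⧸ m)
  exact ⟨(φ.comp (Ideal.Quotient.mkₐ k m)).toRingHom, by
    ext x; exact (φ.comp (Ideal.Quotient.mkₐ k m)).commutes x⟩

end FG

end DescentAux

/-- Let `k` be an algebraically closed field, `V` and `W` algebraic schemes
(separated and of finite type) over `k`, and `K` a field extension of `k`.  If
`V ×_{Spec k} Spec K` and `W ×_{Spec k} Spec K` are isomorphic as `K`-schemes,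
then `V` and `W` are isomorphic as `k`-schemes. -/
theorem isomorphic_of_baseChange_isomorphic
    {k K : Type u} [Field k] [IsAlgClosed k] [Field K] [Algebra k K]
    (V W : Scheme.{u}) (f : V ⟶ Spec (CommRingCat.of k))
    (g : W ⟶ Spec (CommRingCat.of k))
    [IsSeparated f] [LocallyOfFiniteType f] [QuasiCompact f]
    [IsSeparated g] [LocallyOfFiniteType g] [QuasiCompact g]
    (e : pullback f (Spec.map (CommRingCat.ofHom (algebraMap k K))) ≅
         pullback g (Spec.map (CommRingCat.ofHom (algebraMap k K))))
    (he : e.hom ≫ pullback.snd g (Spec.map (CommRingCat.ofHom (algebraMap k K))) =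
      pullback.snd f (Spec.map (CommRingCat.ofHom (algebraMap k K)))) :
    ∃ e₀ : V ≅ W, e₀.hom ≫ g = f := by
  have := LocallyOfFinitePresentation.iff_locallyOfFiniteType.mpr ‹LocallyOfFiniteType f›
  have := LocallyOfFinitePresentation.iff_locallyOfFiniteType.mpr ‹LocallyOfFiniteType g›
  let T : (DescentAux.J k K)ᵒᵖ ⥤ Scheme.{u} := (DescentAux.R k K).op ⋙ Scheme.Spec
  let t (A : (DescentAux.J k K)ᵒᵖ) : T.obj A ⟶ Spec (CommRingCat.of k) :=
    Spec.map (CommRingCat.ofHom (algebraMap k A.unop.1))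
  have ht {A B : (DescentAux.J k K)ᵒᵖ} (h : A ⟶ B) : T.map h ≫ t B = t A :=
    (Spec.map_comp _ _).symm
  have hAff : ∀ i, IsAffine (T.obj i) := fun i ↦
    inferInstanceAs (IsAffine (Spec ((DescentAux.R k K).obj i.unop)))
  let c : Cone T := Scheme.Spec.mapCone (DescentAux.Rc k K).op
  have hc : IsLimit c := isLimitOfPreserves Scheme.Spec (DescentAux.RcColim k K).op
  obtain ⟨i, a, b, ha, hb, h₁, h₂⟩ := DescentAux.exists_stage T t ht f g c
    (Spec.map (CommRingCat.ofHom (algebraMap k K))) (fun i ↦ (Spec.map_comp _ _).symm) hc e he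
  obtain ⟨s, hs⟩ := DescentAux.exists_point k K i.unop
  refine DescentAux.specialize f g (t i) (Spec.map (CommRingCat.ofHom s)) ?_ a b ha hb h₁ h₂
  refine (Spec.map_comp _ _).symm.trans ?_
  refine Eq.trans ?_ (Spec.map_id _)
  exact congrArg (fun φ ↦ Spec.map (CommRingCat.ofHom φ)) hs
end

section
/- Let Ω ⊇ k be algebraically closed fields and let V be a scheme separated and of finite type over Ω. Suppose there exist intermediate fields K₁ and K₂ with k ⊆ Kᵢ ⊆ Ω, each finitely generated as a field extension of k, that are linearly disjoint over k (the multiplication map K₁ ⊗ₖ K₂ → Ω is injective), and suppose that for i = 1, 2 there exists a scheme Vᵢ separated and of finite type over Kᵢ together with an isomorphism V ≅ Vᵢ ×_{Spec Kᵢ} Spec Ω of Ω-schemes. Then there exists a scheme V₀ separated and of finite type over k together with an isomorphism V ≅ V₀ ×_{Spec k} Spec Ω of Ω-schemes. -/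
open AlgebraicGeometry CategoryTheory CategoryTheory.Limits
open scoped TensorProduct

universe u

noncomputable section
namespace Spread
attribute [local simp] pullback.lift_fst pullback.lift_snd pullback.lift_fst_assoc
  pullback.lift_snd_assoc

abbrev FGSub (B R : Type u) [CommRing B] [CommRing R] [Algebra B R] : Type u :=
  {C : Subalgebra B R // C.FG}

section diag
variable (B R : Type u) [CommRing B] [CommRing R] [Algebra B R]

instance : Nonempty (FGSub B R) := ⟨⟨⊥, Subalgebra.fg_bot⟩⟩

instance : IsDirectedOrder (FGSub B R) :=
  ⟨fun a b => ⟨⟨a.1 ⊔ b.1, a.2.sup b.2⟩, le_sup_left (a := a.1), le_sup_right (a := a.1)⟩⟩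

@[simps]
def ringDiag : FGSub B R ⥤ CommRingCat.{u} where
  obj C := .of C.1
  map {C D} h := CommRingCat.ofHom (Subalgebra.inclusion (leOfHom h) : C.1 →ₐ[B] D.1).toRingHom

@[simps]
def ringCocone : Cocone (ringDiag B R) where
  pt := .of R
  ι := { app := fun C => CommRingCat.ofHom (C.1.val : C.1 →ₐ[B] R).toRingHom }

def ringIsColimit : IsColimit (ringCocone B R) := by
  have : ReflectsFilteredColimits (forget CommRingCat.{u}) :=
    ⟨fun _ ↦ reflectsColimitsOfShape_of_reflectsIsomorphisms⟩
  refine ReflectsColimit.reflects (F := forget _)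
    (Types.FilteredColimit.isColimitOf' _ _ ?_ ?_) |>.some
  · intro (x : R)
    exact ⟨⟨Algebra.adjoin B {x}, ⟨{x}, by rw [Finset.coe_singleton]⟩⟩,
      ⟨x, Algebra.self_mem_adjoin_singleton B x⟩, rfl⟩
  · intro i x y h
    exact ⟨i, 𝟙 _, by congr 1; exact Subtype.ext h⟩

variable {B}
abbrev bmap (C : Subalgebra B R) : Spec (.of C) ⟶ Spec (.of B) :=
  Spec.map (CommRingCat.ofHom (algebraMap B C))
abbrev rmap (C : Subalgebra B R) : Spec (.of R) ⟶ Spec (.of C) :=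
  Spec.map (CommRingCat.ofHom (algebraMap C R))
abbrev tmap (B R : Type u) [CommRing B] [CommRing R] [Algebra B R] : Spec (.of R) ⟶ Spec (.of B) :=
  Spec.map (CommRingCat.ofHom (algebraMap B R))

@[simp]
lemma rmap_bmap (C : Subalgebra B R) : rmap R C ≫ bmap R C = tmap B R := by
  rw [← Spec.map_comp]; rfl

@[simp]
lemma rmap_bmap_assoc (C : Subalgebra B R) {Z : Scheme.{u}} (g : _ ⟶ Z) :
    rmap R C ≫ bmap R C ≫ g = tmap B R ≫ g := by
  rw [← rmap_bmap R C, Category.assoc]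

variable {R}
abbrev imap {C D : Subalgebra B R} (h : C ≤ D) : Spec (.of D) ⟶ Spec (.of C) :=
  Spec.map (CommRingCat.ofHom (Subalgebra.inclusion h).toRingHom)

@[simp]
lemma imap_bmap {C D : Subalgebra B R} (h : C ≤ D) : imap h ≫ bmap R C = bmap R D := by
  rw [← Spec.map_comp]; rfl
@[simp]
lemma rmap_imap {C D : Subalgebra B R} (h : C ≤ D) : rmap R D ≫ imap h = rmap R C := by
  rw [← Spec.map_comp]; rfl

variable (B R)
abbrev specDiag : (FGSub B R)ᵒᵖ ⥤ Scheme.{u} := (ringDiag B R).op ⋙ Scheme.Spec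
abbrev specCone : Cone (specDiag B R) := Scheme.Spec.mapCone (ringCocone B R).op
def specIsLimit : IsLimit (specCone B R) := isLimitOfPreserves Scheme.Spec (ringIsColimit B R).op

variable {B} {X : Scheme.{u}} (f : X ⟶ Spec (.of B))

abbrev xmap {R : Type u} [CommRing R] [Algebra B R] (f : X ⟶ Spec (.of B))
    {C D : Subalgebra B R} (h : C ≤ D) :
    pullback f (bmap R D) ⟶ pullback f (bmap R C) :=
  pullback.lift (pullback.fst _ _) (pullback.snd _ _ ≫ imap h) (by simp [pullback.condition])

@[simps]
def xDiag : (FGSub B R)ᵒᵖ ⥤ Scheme.{u} where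
  obj C := pullback f (bmap R C.unop.1)
  map {C D} h := pullback.lift (pullback.fst _ _)
    (pullback.snd _ _ ≫ imap (leOfHom h.unop)) (by simp [pullback.condition])
  map_id C := by
    have : imap (le_refl C.unop.1) = 𝟙 _ := Spec.map_id _
    apply pullback.hom_ext <;> simp [this]
  map_comp g h := by
    have : imap (leOfHom (g ≫ h).unop) = imap (leOfHom g.unop) ≫ imap (leOfHom h.unop) := by
      rw [← Spec.map_comp]; rfl
    apply pullback.hom_ext <;> simp [this]

@[simps]
def xToSpec : xDiag R f ⟶ specDiag B R where
  app C := pullback.snd _ _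
  naturality C D g := pullback.lift_snd _ _ _

@[simps]
def xToX : xDiag R f ⟶ (Functor.const _).obj X where
  app C := pullback.fst _ _
  naturality C D g := (pullback.lift_fst _ _ _).trans (Category.comp_id _).symm

variable {R} {f} {XR : Scheme.{u}} {p : XR ⟶ X} {q : XR ⟶ Spec (.of R)}
  (h : IsPullback p q f (tmap B R))

/-- The map from the base change to `R` to the base change to `C`. -/
abbrev toC (h : IsPullback p q f (tmap B R)) (C : Subalgebra B R) : XR ⟶ pullback f (bmap R C) :=
  pullback.lift p (q ≫ rmap R C) (by simpa using h.w)

lemma toC_isPullback (C : Subalgebra B R) :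
    IsPullback (toC h C) q (pullback.snd f (bmap R C)) (rmap R C) := by
  refine IsPullback.of_right (h₁₂ := pullback.fst _ _) (h₂₂ := bmap R C) (v₁₃ := f) ?_ (by rw [pullback.lift_snd]) (IsPullback.of_hasPullback _ _)
  simpa using h

lemma toC_imap {C D : Subalgebra B R} (hCD : C ≤ D) :
    toC h D ≫ (pullback.lift (pullback.fst _ _) (pullback.snd _ _ ≫ imap hCD)
      (by simp [pullback.condition]) : pullback f (bmap R D) ⟶ pullback f (bmap R C)) =
    toC h C := by
  apply pullback.hom_ext <;> simp

@[simps]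
def xCone : Cone (xDiag R f) where
  pt := XR
  π := { app := fun C => toC h C.unop.1
         naturality := fun C D g => (Category.id_comp _).trans
          (toC_imap h (leOfHom g.unop)).symm }

attribute [local instance] IsCofiltered.isConnected
def xIsLimit : IsLimit (xCone h) :=
  isLimitOfIsPullbackOfIsConnected (xToSpec R f) (xCone h) (specCone B R)
    { hom := q, w := fun j => (pullback.lift_snd _ _ _).symm } (fun i => toC_isPullback h i.unop.1) (specIsLimit B R)


lemma aff_fst {X Y S : Scheme.{u}} (f : X ⟶ S) (g : Y ⟶ S) [IsAffineHom g] :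
    IsAffineHom (pullback.fst f g) :=
  MorphismProperty.of_isPullback (P := @IsAffineHom) (IsPullback.of_hasPullback f g).flip ‹_›

instance xDiag_affine {C D : (FGSub B R)ᵒᵖ} (g : C ⟶ D) : IsAffineHom ((xDiag R f).map g) := by
  have h1 : IsAffineHom (pullback.fst f (bmap R C.unop.1)) := aff_fst _ _
  have h2 : IsAffineHom (pullback.fst f (bmap R D.unop.1)) := aff_fst _ _
  let m : pullback f (bmap R C.unop.1) ⟶ pullback f (bmap R D.unop.1) := (xDiag R f).map g
  have h3 : m ≫ pullback.fst f (bmap R D.unop.1) =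
    pullback.fst f (bmap R C.unop.1) := pullback.lift_fst _ _ _
  have h4 : IsAffineHom (m ≫ pullback.fst f (bmap R D.unop.1)) := by
    rw [h3]; exact h1
  have h5 := IsAffineHom.of_comp m (pullback.fst f (bmap R D.unop.1))
  exact h5

instance xDiag_compact [CompactSpace X] (C : (FGSub B R)ᵒᵖ) : CompactSpace ((xDiag R f).obj C) :=
  have : IsAffineHom (bmap R C.unop.1) := inferInstance
  have := aff_fst f (bmap R C.unop.1)
  have h := QuasiCompact.compactSpace_of_compactSpace (pullback.fst f (bmap R C.unop.1))
  h

instance xDiag_qs [QuasiSeparatedSpace X] (C : (FGSub B R)ᵒᵖ) :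
    QuasiSeparatedSpace ((xDiag R f).obj C) :=
  have : IsAffineHom (bmap R C.unop.1) := inferInstance
  have := aff_fst f (bmap R C.unop.1)
  have h := quasiSeparatedSpace_of_quasiSeparated (pullback.fst f (bmap R C.unop.1))
  h

include h in
lemma exists_hom [CompactSpace X] [QuasiSeparatedSpace X] {Y : Scheme.{u}} (g : Y ⟶ Spec (.of B))
    [LocallyOfFinitePresentation g] (a : XR ⟶ Y) (ha : a ≫ g = p ≫ f) :
    ∃ C : Subalgebra B R, C.FG ∧ ∃ a' : pullback f (bmap R C) ⟶ Y,
      toC h C ≫ a' = a ∧ a' ≫ g = pullback.fst _ _ ≫ f := by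
  obtain ⟨i, a', h1, h2⟩ := Scheme.exists_π_app_comp_eq_of_locallyOfFinitePresentation
    (xDiag R f) (xToX R f ≫ (Functor.const _).map f) g (xCone h) (xIsLimit h) a (by
      ext i
      change toC h i.unop.1 ≫ pullback.fst _ _ ≫ f = a ≫ g
      simp [ha])
  exact ⟨i.unop.1, i.unop.2, a', h1, h2⟩

include h in
lemma exists_eq [CompactSpace X] {Y : Scheme.{u}} (g : Y ⟶ Spec (.of B))
    [LocallyOfFiniteType g] {C : Subalgebra B R} (hC : C.FG) (a b : pullback f (bmap R C) ⟶ Y)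
    (ha : a ≫ g = pullback.fst _ _ ≫ f) (hb : b ≫ g = pullback.fst _ _ ≫ f)
    (hab : toC h C ≫ a = toC h C ≫ b) :
    ∃ D : Subalgebra B R, D.FG ∧ ∃ hCD : C ≤ D, xmap f hCD ≫ a = xmap f hCD ≫ b := by
  obtain ⟨k, hk, e⟩ := Scheme.exists_hom_comp_eq_comp_of_locallyOfFiniteType
    (xDiag R f) (xToX R f ≫ (Functor.const _).map f) g (xCone h) (xIsLimit h)
    (i := Opposite.op ⟨C, hC⟩) a b ha.symm hb.symm hab
  exact ⟨k.unop.1, k.unop.2, leOfHom hk.unop, e⟩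

include h in
lemma exists_opens (U : XR.Opens) (hU : IsCompact (U : Set XR)) :
    ∃ C : Subalgebra B R, C.FG ∧ ∃ V : (pullback f (bmap R C)).Opens,
      IsCompact (V : Set (pullback f (bmap R C) : Scheme)) ∧ toC h C ⁻¹ᵁ V = U := by
  obtain ⟨i, V, hV, e⟩ := exists_preimage_eq (xDiag R f) (xCone h) (xIsLimit h) U hU
  exact ⟨i.unop.1, i.unop.2, V, hV, e⟩


section iso
variable {Y YR : Scheme.{u}} {g : Y ⟶ Spec (.of B)} {pY : YR ⟶ Y} {qY : YR ⟶ Spec (.of R)}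
  (hY : IsPullback pY qY g (tmap B R))

abbrev aUp {C : Subalgebra B R} (a : pullback f (bmap R C) ⟶ Y) (ha : a ≫ g = pullback.fst _ _ ≫ f)
    {D : Subalgebra B R} (hCD : C ≤ D) : pullback f (bmap R D) ⟶ pullback g (bmap R D) :=
  pullback.lift (xmap f hCD ≫ a) (pullback.snd _ _) (by
    rw [Category.assoc, ha, pullback.lift_fst_assoc, pullback.condition])

include h hY in
lemma half [CompactSpace X] [LocallyOfFiniteType f] (e : XR ≅ YR)
    {C₁ C₂ : Subalgebra B R} (a : pullback f (bmap R C₁) ⟶ Y)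
    (ha : a ≫ g = pullback.fst _ _ ≫ f) (b : pullback g (bmap R C₂) ⟶ X)
    (hb : b ≫ f = pullback.fst _ _ ≫ g) (hC₁ : C₁.FG) (hC₂ : C₂.FG)
    (hea : toC h C₁ ≫ a = e.hom ≫ pY) (heb : toC hY C₂ ≫ b = e.inv ≫ p) (heq : e.hom ≫ qY = q) :
    ∃ D : Subalgebra B R, D.FG ∧ C₁ ⊔ C₂ ≤ D ∧ ∀ (E : Subalgebra B R) (_ : D ≤ E)
      (h₁ : C₁ ≤ E) (h₂ : C₂ ≤ E), aUp a ha h₁ ≫ aUp b hb h₂ = 𝟙 _ := by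
  have h1 : C₁ ≤ C₁ ⊔ C₂ := le_sup_left
  have h2 : C₂ ≤ C₁ ⊔ C₂ := le_sup_right
  have key : toC h (C₁ ⊔ C₂) ≫ aUp a ha h1 = e.hom ≫ toC hY (C₁ ⊔ C₂) := by
    apply pullback.hom_ext
    · rw [Category.assoc, pullback.lift_fst, ← Category.assoc, toC_imap, hea, Category.assoc,
        pullback.lift_fst]
    · simp [reassoc_of% heq]
  obtain ⟨D, hD, hle, hE⟩ := exists_eq h f (hC₁.sup hC₂) (aUp a ha h1 ≫ xmap g h2 ≫ b)
    (pullback.fst _ _) (by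
      rw [Category.assoc, Category.assoc, hb, pullback.lift_fst_assoc, pullback.lift_fst_assoc,
        Category.assoc, ha, pullback.lift_fst_assoc]) rfl (by
      rw [reassoc_of% key, ← Category.assoc (toC hY _), toC_imap, heb, e.hom_inv_id_assoc,
        pullback.lift_fst])
  refine ⟨D, hD, hle, fun E hDE h₁ h₂ => ?_⟩
  have hCE := hle.trans hDE
  have key2 : aUp a ha h₁ ≫ xmap g h₂ = xmap f hCE ≫ aUp a ha h1 ≫ xmap g h2 := by
    apply pullback.hom_ext
    · simp only [Category.assoc, pullback.lift_fst]
      rw [← Category.assoc (xmap f hCE)]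
      congr 1
      apply pullback.hom_ext
      · simp
      · simp [← Spec.map_comp]; rfl
    · simp [← Spec.map_comp]; rfl
  have key3 : xmap f hCE = xmap f hDE ≫ xmap f hle := by
    apply pullback.hom_ext
    · simp
    · simp [← Spec.map_comp]; rfl
  apply pullback.hom_ext
  · rw [Category.assoc, pullback.lift_fst, reassoc_of% key2, key3, Category.assoc, hE]
    simp
  · simp

include h hY in
lemma exists_iso [CompactSpace X] [QuasiSeparatedSpace X] [CompactSpace Y] [QuasiSeparatedSpace Y]
    [LocallyOfFinitePresentation f] [LocallyOfFinitePresentation g] (e : XR ≅ YR)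
    (heq : e.hom ≫ qY = q) :
    ∃ C : Subalgebra B R, C.FG ∧ ∃ e' : pullback f (bmap R C) ≅ pullback g (bmap R C),
      e'.hom ≫ pullback.snd _ _ = pullback.snd _ _ ∧ toC h C ≫ e'.hom = e.hom ≫ toC hY C := by
  obtain ⟨C₁, hC₁, a, hea, ha⟩ := exists_hom h g (e.hom ≫ pY) (by
    rw [Category.assoc, hY.w, reassoc_of% heq, h.w])
  have heq' : e.inv ≫ q = qY := by rw [← heq, e.inv_hom_id_assoc]
  obtain ⟨C₂, hC₂, b, heb, hb⟩ := exists_hom hY f (e.inv ≫ p) (by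
    rw [Category.assoc, h.w, reassoc_of% heq', hY.w])
  obtain ⟨D, hD, hle, H⟩ := half h hY e a ha b hb hC₁ hC₂ hea heb heq
  obtain ⟨D', hD', hle', H'⟩ := half hY h e.symm b hb a ha hC₂ hC₁ heb hea heq'
  have h₁ : C₁ ≤ D ⊔ D' := le_sup_left.trans (hle.trans le_sup_left)
  have h₂ : C₂ ≤ D ⊔ D' := le_sup_right.trans (hle.trans le_sup_left)
  refine ⟨D ⊔ D', hD.sup hD', ⟨aUp a ha h₁, aUp b hb h₂, H _ le_sup_left h₁ h₂,
    H' _ le_sup_right h₂ h₁⟩, pullback.lift_snd _ _ _, ?_⟩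
  dsimp only
  apply pullback.hom_ext
  · rw [Category.assoc, pullback.lift_fst, ← Category.assoc, toC_imap, hea, Category.assoc,
      pullback.lift_fst]
  · simp [reassoc_of% heq]

end iso
end diag
end Spread

end

noncomputable section
namespace Spread

section glue

def cover2 {W W₁ W₂ : Scheme.{u}} (j₁ : W₁ ⟶ W) (j₂ : W₂ ⟶ W) [IsOpenImmersion j₁]
    [IsOpenImmersion j₂] (hj : ∀ x : W, x ∈ Set.range j₁ ∨ x ∈ Set.range j₂) :
    Scheme.OpenCover.{u} W where
  I₀ := ULift.{u} Bool
  X b := match b with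
    | ⟨true⟩ => W₁
    | ⟨false⟩ => W₂
  f b := match b with
    | ⟨true⟩ => j₁
    | ⟨false⟩ => j₂
  mem₀ := by
    rw [Scheme.presieve₀_mem_precoverage_iff]
    refine ⟨fun x ↦ ?_, ?_⟩
    · rcases hj x with h | h
      · exact ⟨⟨true⟩, h⟩
      · exact ⟨⟨false⟩, h⟩
    · rintro ⟨_ | _⟩ <;> assumption

lemma exists_desc {W W₁ W₂ W₁₂ : Scheme.{u}} {j₁ : W₁ ⟶ W} {j₂ : W₂ ⟶ W} [IsOpenImmersion j₁]
    [IsOpenImmersion j₂] (hj : ∀ x : W, x ∈ Set.range j₁ ∨ x ∈ Set.range j₂)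
    {t₁ : W₁₂ ⟶ W₁} {t₂ : W₁₂ ⟶ W₂} (ht : IsPullback t₁ t₂ j₁ j₂) {Z : Scheme.{u}}
    (a₁ : W₁ ⟶ Z) (a₂ : W₂ ⟶ Z) (ha : t₁ ≫ a₁ = t₂ ≫ a₂) :
    ∃ a : W ⟶ Z, j₁ ≫ a = a₁ ∧ j₂ ≫ a = a₂ := by
  let φ : ∀ x, (cover2 j₁ j₂ hj).X x ⟶ Z := fun b => match b with
    | ⟨true⟩ => a₁
    | ⟨false⟩ => a₂
  have h12 : pullback.fst j₁ j₂ ≫ a₁ = pullback.snd j₁ j₂ ≫ a₂ := by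
    rw [← cancel_epi ht.isoPullback.hom]; simpa using ha
  have h11 : pullback.fst j₁ j₁ ≫ a₁ = pullback.snd j₁ j₁ ≫ a₁ := by
    congr 1; rw [← cancel_mono j₁]; exact pullback.condition
  have h22 : pullback.fst j₂ j₂ ≫ a₂ = pullback.snd j₂ j₂ ≫ a₂ := by
    congr 1; rw [← cancel_mono j₂]; exact pullback.condition
  have h21 : pullback.fst j₂ j₁ ≫ a₂ = pullback.snd j₂ j₁ ≫ a₁ := by
    rw [← cancel_epi ht.flip.isoPullback.hom]; simpa using ha.symm
  have H : ∀ x y, pullback.fst ((cover2 j₁ j₂ hj).f x) ((cover2 j₁ j₂ hj).f y) ≫ φ x =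
      pullback.snd _ _ ≫ φ y := by
    rintro ⟨_ | _⟩ ⟨_ | _⟩
    exacts [h22, h21, h12, h11]
  exact ⟨(cover2 j₁ j₂ hj).glueMorphisms φ H,
    (cover2 j₁ j₂ hj).ι_glueMorphisms φ H ⟨true⟩, (cover2 j₁ j₂ hj).ι_glueMorphisms φ H ⟨false⟩⟩

lemma exists_glue {X₁ X₂ X₁₂ : Scheme.{u}} (i₁ : X₁₂ ⟶ X₁) (i₂ : X₁₂ ⟶ X₂) [IsOpenImmersion i₁]
    [IsOpenImmersion i₂] : ∃ (Z : Scheme.{u}) (z₁ : X₁ ⟶ Z) (z₂ : X₂ ⟶ Z),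
      IsOpenImmersion z₁ ∧ IsOpenImmersion z₂ ∧ i₁ ≫ z₁ = i₂ ≫ z₂ ∧
      (∀ x : Z, x ∈ Set.range z₁ ∨ x ∈ Set.range z₂) ∧
      (∀ x₁ x₂, z₁ x₁ = z₂ x₂ → ∃ x, i₁ x = x₁ ∧ i₂ x = x₂) := by
  have hF : ∀ {i j : WalkingSpan} (f : i ⟶ j), IsOpenImmersion ((span i₁ i₂).map f) := by
    rintro i j (_ | _ | _)
    · rw [WidePushoutShape.hom_id, CategoryTheory.Functor.map_id]; infer_instance
    · exact ‹IsOpenImmersion i₁›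
    · exact ‹IsOpenImmersion i₂›
  have hw : ∀ j : WalkingPair, colimit.ι (span i₁ i₂) none = (span i₁ i₂).map (.init j) ≫ colimit.ι (span i₁ i₂) (some j) :=
    fun j => (colimit.w (span i₁ i₂) (.init j)).symm
  have hw1 : colimit.ι (span i₁ i₂) none = i₁ ≫ colimit.ι (span i₁ i₂) (some .left) :=
    hw .left
  have hw2 : colimit.ι (span i₁ i₂) none = i₂ ≫ colimit.ι (span i₁ i₂) (some .right) :=
    hw .right
  refine ⟨colimit (span i₁ i₂), colimit.ι (span i₁ i₂) (some .left),
    colimit.ι (span i₁ i₂) (some .right), ?_, ?_, ?_, ?_, ?_⟩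
  · exact Scheme.IsLocallyDirected.instIsOpenImmersionι (span i₁ i₂) _
  · exact Scheme.IsLocallyDirected.instIsOpenImmersionι (span i₁ i₂) _
  · exact hw1.symm.trans hw2
  · intro x
    obtain ⟨i, xi, h⟩ := Scheme.IsLocallyDirected.ι_jointly_surjective (span i₁ i₂) x
    rcases i with _ | _ | _
    · left
      refine ⟨i₁ xi, Eq.trans ?_ h⟩
      exact (congrArg (fun m : X₁₂ ⟶ colimit (span i₁ i₂) => m xi) hw1).symm
    · exact Or.inl ⟨xi, h⟩
    · exact Or.inr ⟨xi, h⟩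
  · intro x₁ x₂ h
    obtain ⟨k, fi, fj, x, h1, h2⟩ := (Scheme.IsLocallyDirected.ι_eq_ι_iff (span i₁ i₂)).1 h
    rcases k with _ | _ | _
    · obtain rfl : fi = WidePushoutShape.Hom.init WalkingPair.left := Subsingleton.elim _ _
      obtain rfl : fj = WidePushoutShape.Hom.init WalkingPair.right := Subsingleton.elim _ _
      exact ⟨x, h1, h2⟩
    · nomatch fj
    · nomatch fi

/-- Gluing models. -/
lemma glue_model {S T : Scheme.{u}} (b : T ⟶ S)
    {W W₁ W₂ W₁₂ : Scheme.{u}} {j₁ : W₁ ⟶ W} {j₂ : W₂ ⟶ W} [IsOpenImmersion j₁]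
    [IsOpenImmersion j₂] (hj : ∀ x : W, x ∈ Set.range j₁ ∨ x ∈ Set.range j₂)
    {t₁ : W₁₂ ⟶ W₁} {t₂ : W₁₂ ⟶ W₂} (ht : IsPullback t₁ t₂ j₁ j₂)
    {w : W ⟶ T}
    {X₁ X₂ X₁₂ : Scheme.{u}} {i₁ : X₁₂ ⟶ X₁} {i₂ : X₁₂ ⟶ X₂} [IsOpenImmersion i₁]
    [IsOpenImmersion i₂] {f₁ : X₁ ⟶ S} {f₂ : X₂ ⟶ S} (hi : i₁ ≫ f₁ = i₂ ≫ f₂)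
    {p₁ : W₁ ⟶ X₁} {p₂ : W₂ ⟶ X₂} {p₁₂ : W₁₂ ⟶ X₁₂}
    (h₁ : IsPullback p₁ (j₁ ≫ w) f₁ b) (h₂ : IsPullback p₂ (j₂ ≫ w) f₂ b)
    (h₁₂ : IsPullback p₁₂ (t₁ ≫ j₁ ≫ w) (i₁ ≫ f₁) b)
    (c₁ : t₁ ≫ p₁ = p₁₂ ≫ i₁) (c₂ : t₂ ≫ p₂ = p₁₂ ≫ i₂)
    [LocallyOfFiniteType f₁] [LocallyOfFiniteType f₂] [CompactSpace X₁] [CompactSpace X₂] :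
    ∃ (Z : Scheme.{u}) (g : Z ⟶ S) (P : W ⟶ Z), LocallyOfFiniteType g ∧ CompactSpace Z ∧
      IsPullback P w g b := by
  obtain ⟨Z, z₁, z₂, hz₁, hz₂, hz, hcov, hinj⟩ := exists_glue i₁ i₂
  have hzp : IsPullback i₁ i₂ z₁ z₂ := by
    refine IsOpenImmersion.isPullback i₁ i₂ z₁ z₂ hz.symm ?_
    ext x
    constructor
    · rintro ⟨y, hy⟩
      obtain ⟨x', -, h⟩ := hinj _ _ hy
      exact ⟨x', h⟩
    · rintro ⟨x', rfl⟩
      exact ⟨i₁ x', by rw [← Scheme.Hom.comp_apply, hz, Scheme.Hom.comp_apply]⟩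
  obtain ⟨g, hg₁, hg₂⟩ := exists_desc hcov hzp f₁ f₂ hi
  obtain ⟨P, hP₁, hP₂⟩ := exists_desc hj ht (p₁ ≫ z₁) (p₂ ≫ z₂) (by
    rw [reassoc_of% c₁, reassoc_of% c₂, hz])
  have q₁ : IsPullback p₁₂ t₁ i₁ p₁ := IsPullback.of_bot h₁₂ c₁.symm h₁
  have q₂ : IsPullback p₁₂ t₂ i₂ p₂ := by
    rw [hi, ← Category.assoc, ht.w, Category.assoc] at h₁₂
    exact IsPullback.of_bot h₁₂ c₂.symm h₂
  have r₁ : IsPullback p₁ j₁ z₁ P := by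
    refine IsOpenImmersion.isPullback _ _ _ _ hP₁ ?_
    ext x
    constructor
    · rintro ⟨y, hy⟩
      rcases hj x with ⟨x, rfl⟩ | ⟨x, rfl⟩
      · exact ⟨x, rfl⟩
      · have : z₁ y = z₂ (p₂ x) := by
          rw [hy, ← Scheme.Hom.comp_apply, ← Scheme.Hom.comp_apply, hP₂]
        obtain ⟨y', -, h⟩ := hinj _ _ this
        obtain ⟨v, hv1, hv2⟩ := Scheme.Pullback.exists_preimage_pullback y' x h
        refine ⟨t₁ (q₂.isoPullback.inv v), ?_⟩
        rw [← Scheme.Hom.comp_apply, ht.w, ← Scheme.Hom.comp_apply,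
          IsPullback.isoPullback_inv_snd_assoc, Scheme.Hom.comp_apply, hv2]
    · rintro ⟨x', rfl⟩
      exact ⟨p₁ x', by rw [← Scheme.Hom.comp_apply, ← hP₁, Scheme.Hom.comp_apply]⟩
  have r₂ : IsPullback p₂ j₂ z₂ P := by
    refine IsOpenImmersion.isPullback _ _ _ _ hP₂ ?_
    ext x
    constructor
    · rintro ⟨y, hy⟩
      rcases hj x with ⟨x, rfl⟩ | ⟨x, rfl⟩
      · have : z₁ (p₁ x) = z₂ y := by
          rw [hy, ← Scheme.Hom.comp_apply, ← Scheme.Hom.comp_apply, hP₁]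
        obtain ⟨y', h, -⟩ := hinj _ _ this
        obtain ⟨v, hv1, hv2⟩ := Scheme.Pullback.exists_preimage_pullback y' x h
        refine ⟨t₂ (q₁.isoPullback.inv v), ?_⟩
        rw [← Scheme.Hom.comp_apply, ← ht.w, ← Scheme.Hom.comp_apply,
          IsPullback.isoPullback_inv_snd_assoc, Scheme.Hom.comp_apply, hv2]
      · exact ⟨x, rfl⟩
    · rintro ⟨x', rfl⟩
      exact ⟨p₂ x', by rw [← Scheme.Hom.comp_apply, ← hP₂, Scheme.Hom.comp_apply]⟩
  have key : ∀ {A A' : Scheme.{u}} (p : A' ⟶ A) (j : A' ⟶ W) (z : A ⟶ Z) [IsOpenImmersion z]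
      (f : A ⟶ S), IsPullback p j z P → IsPullback p (j ≫ w) f b → z ≫ g = f →
      IsPullback (pullback.snd P z) (pullback.fst P z ≫ w) (z ≫ g) b := by
    rintro A A' p j z _ f r h rfl
    refine h.of_iso r.flip.isoPullback (Iso.refl _) (Iso.refl _) (Iso.refl _) ?_ ?_ ?_ ?_ <;> simp
  refine ⟨Z, g, P, ?_, ?_, ?_⟩
  · have := HasRingHomProperty.instIsZariskiLocalAtSource
      (P := (@LocallyOfFiniteType : MorphismProperty Scheme.{u})) (Q := RingHom.FiniteType)
    refine (IsZariskiLocalAtSource.iff_of_openCover (P := @LocallyOfFiniteType) (cover2 z₁ z₂ hcov)).2 ?_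
    rintro ⟨_ | _⟩
    · change LocallyOfFiniteType (z₂ ≫ g); rw [hg₂]; infer_instance
    · change LocallyOfFiniteType (z₁ ≫ g); rw [hg₁]; infer_instance
  · constructor
    have : (Set.univ : Set Z) = Set.range z₁ ∪ Set.range z₂ := by
      ext x; simpa using hcov x
    rw [this]
    exact (isCompact_range z₁.continuous).union (isCompact_range z₂.continuous)
  · refine Scheme.isPullback_of_openCover _ _ _ _ (cover2 z₁ z₂ hcov) ?_
    rintro ⟨_ | _⟩
    · exact key p₂ j₂ z₂ f₂ r₂ h₂ hg₂
    · exact key p₁ j₁ z₁ f₁ r₁ h₁ hg₁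

end glue
end Spread

end

noncomputable section
namespace Spread

/-- Models of affine schemes. -/
lemma affine_model_ring (B R S : Type u) [CommRing B] [CommRing R] [Algebra B R] [CommRing S]
    [Algebra R S] [Algebra.FinitePresentation R S] :
    ∃ C : Subalgebra B R, C.FG ∧ ∃ (M : Type u) (_ : CommRing M) (_ : Algebra C M)
      (p : M →+* S), Algebra.FiniteType C M ∧
      IsPullback (Spec.map (CommRingCat.ofHom p)) (tmap R S) (tmap C M) (tmap C R) := by
  obtain ⟨n, m, ⟨P⟩⟩ := Algebra.Presentation.exists_presentation_fin (R := R) (S := S)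
  let C := Algebra.adjoin B P.coeffs
  have : P.HasCoeffs C := ⟨fun x hx => ⟨⟨x, Algebra.subset_adjoin hx⟩, rfl⟩⟩
  refine ⟨C, ⟨P.finite_coeffs.toFinset, by simp [C]⟩, P.ModelOfHasCoeffs C, inferInstance, inferInstance,
    (P.tensorModelOfHasCoeffsEquiv C).toAlgHom.toRingHom.comp Algebra.TensorProduct.includeRight.toRingHom, inferInstance, ?_⟩
  refine isPullback_SpecMap_of_isPushout _ _ _ _ ?_
  refine (CommRingCat.isPushout_tensorProduct C R (P.ModelOfHasCoeffs C)).flip.of_iso (Iso.refl _)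
    (Iso.refl _) (Iso.refl _) (P.tensorModelOfHasCoeffsEquiv C).toRingEquiv.toCommRingCatIso
    (by simp) (by simp) ?_ ?_
  · rfl
  · ext x
    simp
    exact ((P.tensorModelOfHasCoeffsEquiv C).commutes x)

attribute [local simp] pullback.lift_fst pullback.lift_snd pullback.lift_fst_assoc
  pullback.lift_snd_assoc

lemma affine_model (B : Type u) {R : Type u} [CommRing B] [CommRing R] [Algebra B R]
    {W : Scheme.{u}} [IsAffine W] (w : W ⟶ Spec (.of R)) [LocallyOfFinitePresentation w] :
    ∃ C : Subalgebra B R, C.FG ∧ ∃ (X : Scheme.{u}) (g : X ⟶ Spec (.of C)) (P : W ⟶ X),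
      LocallyOfFiniteType g ∧ CompactSpace X ∧ IsPullback P w g (tmap C R) := by
  let φ : CommRingCat.of R ⟶ Γ(W, ⊤) := Spec.preimage (W.isoSpec.inv ≫ w)
  have hφ : W.isoSpec.hom ≫ Spec.map φ = w := by simp [φ]
  let _ : Algebra R Γ(W, ⊤) := φ.hom.toAlgebra
  have h1 : LocallyOfFinitePresentation (Spec.map φ) := by simp only [φ, Spec.map_preimage]; infer_instance
  have h2 : Algebra.FinitePresentation R Γ(W, ⊤) :=
    (HasRingHomProperty.Spec_iff (P := @LocallyOfFinitePresentation)).1 h1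
  obtain ⟨C, hC, M, _, _, p, hM, hp⟩ := affine_model_ring B R Γ(W, ⊤)
  refine ⟨C, hC, Spec (.of M), tmap C M, W.isoSpec.hom ≫ Spec.map (CommRingCat.ofHom p), ?_,
    inferInstance, ?_⟩
  · refine (HasRingHomProperty.Spec_iff (P := @LocallyOfFiniteType)).2 ?_
    exact RingHom.finiteType_algebraMap.2 hM
  · refine hp.of_iso W.isoSpec.symm (Iso.refl _) (Iso.refl _) (Iso.refl _) ?_ ?_ ?_ ?_
    · simp
    · rw [← hφ]; simp; rfl
    · simp
    · simp

section
variable {B R : Type u} [CommRing B] [CommRing R] [Algebra B R] [IsNoetherianRing B]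

instance : IsLocallyNoetherian (Spec (.of B)) := by
  have : IsNoetherianRing (CommRingCat.of B) := ‹_›
  infer_instance

lemma glue_same {W W₁ W₂ W₁₂ : Scheme.{u}} {j₁ : W₁ ⟶ W} {j₂ : W₂ ⟶ W} [IsOpenImmersion j₁]
    [IsOpenImmersion j₂] (hj : ∀ x : W, x ∈ Set.range j₁ ∨ x ∈ Set.range j₂)
    {t₁ : W₁₂ ⟶ W₁} {t₂ : W₁₂ ⟶ W₂} [IsOpenImmersion t₁] [IsOpenImmersion t₂]
    (ht : IsPullback t₁ t₂ j₁ j₂) {w : W ⟶ Spec (.of R)}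
    {X₁ X₂ : Scheme.{u}} {f₁ : X₁ ⟶ Spec (.of B)} {f₂ : X₂ ⟶ Spec (.of B)}
    {p₁ : W₁ ⟶ X₁} {p₂ : W₂ ⟶ X₂}
    (h₁ : IsPullback p₁ (j₁ ≫ w) f₁ (tmap B R)) (h₂ : IsPullback p₂ (j₂ ≫ w) f₂ (tmap B R))
    [LocallyOfFiniteType f₁] [LocallyOfFiniteType f₂] [CompactSpace X₁] [CompactSpace X₂]
    (V₁ : X₁.Opens) (V₂ : X₂.Opens) (hV₁ : p₁ ⁻¹ᵁ V₁ = t₁.opensRange)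
    (hV₂ : p₂ ⁻¹ᵁ V₂ = t₂.opensRange) :
    ∃ C : Subalgebra B R, C.FG ∧ ∃ (X : Scheme.{u}) (g : X ⟶ Spec (.of C)) (P : W ⟶ X),
      LocallyOfFiniteType g ∧ CompactSpace X ∧ IsPullback P w g (tmap C R) := by
  have n₁ : IsLocallyNoetherian X₁ := LocallyOfFiniteType.isLocallyNoetherian f₁
  have n₂ : IsLocallyNoetherian X₂ := LocallyOfFiniteType.isLocallyNoetherian f₂
  have n₁' : IsNoetherian X₁ := {}
  have n₂' : IsNoetherian X₂ := {}
  have m₁ : CompactSpace V₁ := isCompact_iff_compactSpace.1 (TopologicalSpace.NoetherianSpace.isCompact _)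
  have m₂ : CompactSpace V₂ := isCompact_iff_compactSpace.1 (TopologicalSpace.NoetherianSpace.isCompact _)
  have aux : ∀ {A A' U : Scheme.{u}} (p : A' ⟶ A) (V : A.Opens) (t : U ⟶ A') [IsOpenImmersion t],
      p ⁻¹ᵁ V = t.opensRange → ∃ l : U ⟶ V, IsPullback l t V.ι p := by
    intro A A' U p V t _ h
    have hr : Set.range (t ≫ p) ⊆ Set.range V.ι := by
      rintro _ ⟨x, rfl⟩
      have : t x ∈ p ⁻¹ᵁ V := by rw [h]; exact ⟨x, rfl⟩
      simpa using this
    exact ⟨IsOpenImmersion.lift V.ι (t ≫ p) hr, IsOpenImmersion.isPullback _ _ _ _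
      (IsOpenImmersion.lift_fac _ _ _).symm (by simpa using h)⟩
  obtain ⟨l₁, hl₁⟩ := aux p₁ V₁ t₁ hV₁
  obtain ⟨l₂, hl₂⟩ := aux p₂ V₂ t₂ hV₂
  have k₁ := hl₁.paste_vert h₁
  have k₂ := hl₂.paste_vert h₂
  obtain ⟨C, hC, e, he1, he2⟩ := exists_iso k₁ k₂ (Iso.refl _) (by simp [ht.w_assoc])
  let mk : ∀ {A : Scheme.{u}} (f : A ⟶ Spec (.of B)) (V : A.Opens),
      pullback (V.ι ≫ f) (bmap R C) ⟶ pullback f (bmap R C) := fun f V =>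
    pullback.lift (pullback.fst _ _ ≫ V.ι) (pullback.snd _ _) (by simp [pullback.condition])
  have mkp : ∀ {A : Scheme.{u}} (f : A ⟶ Spec (.of B)) (V : A.Opens), IsOpenImmersion (mk f V) := by
    intro A f V
    have : IsPullback (pullback.fst _ _) (mk f V) V.ι (pullback.fst f (bmap R C)) := by
      refine IsPullback.of_bot (v₂₂ := f) (v₂₁ := pullback.snd f (bmap R C)) (h₃₁ := bmap R C) ?_ ?_
        (IsPullback.of_hasPullback _ _)
      · simpa [mk] using IsPullback.of_hasPullback _ _
      · simp [mk]
    exact MorphismProperty.of_isPullback (P := @IsOpenImmersion) this inferInstance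
  have := mkp f₁ V₁
  have := mkp f₂ V₂
  have hc1 : CompactSpace (pullback f₁ (bmap R C) : Scheme.{u}) :=
    QuasiCompact.compactSpace_of_compactSpace (pullback.fst f₁ (bmap R C))
  have hc2 : CompactSpace (pullback f₂ (bmap R C) : Scheme.{u}) :=
    QuasiCompact.compactSpace_of_compactSpace (pullback.fst f₂ (bmap R C))
  refine ⟨C, hC, ?_⟩
  refine glue_model (tmap C R) hj ht (i₁ := mk f₁ V₁) (i₂ := e.hom ≫ mk f₂ V₂) ?_
    (toC_isPullback h₁ C) (toC_isPullback h₂ C) (p₁₂ := toC k₁ C) ?_ ?_ ?_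
  · simp [mk, he1]
  · simpa [mk] using toC_isPullback k₁ C
  · apply pullback.hom_ext <;> simp [mk, hl₁.w]
  · rw [reassoc_of% he2]
    apply pullback.hom_ext
    · simp [mk, hl₂.w]
    · simp [mk]
end

end Spread

end

noncomputable section
namespace Spread
attribute [local simp] pullback.lift_fst pullback.lift_snd pullback.lift_fst_assoc
  pullback.lift_snd_assoc

def HasModel (k : Type u) {K : Type u} [CommRing k] [CommRing K] [Algebra k K] {W : Scheme.{u}}
    (w : W ⟶ Spec (.of K)) : Prop :=
  ∃ (C : Type u) (_ : CommRing C) (_ : Algebra k C) (_ : Algebra C K) (_ : IsScalarTower k C K),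
    Algebra.FiniteType k C ∧ ∃ (X : Scheme.{u}) (g : X ⟶ Spec (.of C)) (P : W ⟶ X),
      LocallyOfFiniteType g ∧ CompactSpace X ∧ IsPullback P w g (tmap C K)

variable {k K : Type u} [CommRing k] [CommRing K] [Algebra k K]

lemma ft_sub {B : Type u} [CommRing B] [Algebra k B] [Algebra B K] [IsScalarTower k B K]
    [hB : Algebra.FiniteType k B] {C : Subalgebra B K} (hC : C.FG) :
    Algebra.FiniteType k C := by
  have : Algebra.FiniteType B C := (Subalgebra.fg_iff_finiteType C).1 hC
  exact hB.trans this

lemma tower_sub {B : Type u} [CommRing B] [Algebra k B] [Algebra B K] [IsScalarTower k B K]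
    (C : Subalgebra B K) : IsScalarTower k C K :=
  IsScalarTower.of_algebraMap_eq fun x => by
    rw [IsScalarTower.algebraMap_apply k B K, IsScalarTower.algebraMap_apply k B C]
    rfl

lemma compact_pullback {B : Type u} [CommRing B] {C : Type u} [CommRing C] {X : Scheme.{u}}
    [CompactSpace X] (f : X ⟶ Spec (.of B)) (g : Spec (.of C) ⟶ Spec (.of B)) :
    CompactSpace (pullback f g : Scheme.{u}) :=
  QuasiCompact.compactSpace_of_compactSpace (pullback.fst f g)

lemma HasModel.step [IsNoetherianRing k]
    {W W₁ W₂ W₁₂ : Scheme.{u}} {j₁ : W₁ ⟶ W} {j₂ : W₂ ⟶ W} [IsOpenImmersion j₁]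
    [IsOpenImmersion j₂] (hj : ∀ x : W, x ∈ Set.range j₁ ∨ x ∈ Set.range j₂)
    {t₁ : W₁₂ ⟶ W₁} {t₂ : W₁₂ ⟶ W₂} [IsOpenImmersion t₁] [IsOpenImmersion t₂]
    (ht : IsPullback t₁ t₂ j₁ j₂) {w : W ⟶ Spec (.of K)} (h₁ : HasModel k (j₁ ≫ w))
    [IsAffine W₂] [LocallyOfFinitePresentation (j₂ ≫ w)] [CompactSpace W₁₂] : HasModel k w := by
  obtain ⟨B, _, _, _, _, hB, X₁, f₁, p₁, _, _, hp₁⟩ := h₁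
  obtain ⟨C, hC, X₂, f₂, p₂, _, _, hp₂⟩ := affine_model B (j₂ ≫ w)
  have hp₁' := toC_isPullback hp₁ C
  have : Algebra.FiniteType k C := ft_sub hC
  have : IsScalarTower k C K := tower_sub C
  have := compact_pullback f₁ (bmap K C)
  obtain ⟨D₁, hD₁, V₁, hV₁, e₁⟩ := exists_opens hp₁' t₁.opensRange
    (isCompact_range t₁.continuous)
  obtain ⟨D₂, hD₂, V₂, hV₂, e₂⟩ := exists_opens hp₂ t₂.opensRange
    (isCompact_range t₂.continuous)
  let D := D₁ ⊔ D₂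
  have l₁ : D₁ ≤ D := le_sup_left
  have l₂ : D₂ ≤ D := le_sup_right
  have hD : D.FG := hD₁.sup hD₂
  have : Algebra.FiniteType k D := ft_sub hD
  have : IsScalarTower k D K := tower_sub D
  have : IsNoetherianRing D := Algebra.FiniteType.isNoetherianRing k D
  have := compact_pullback (pullback.snd f₁ (bmap K C)) (bmap K D)
  have := compact_pullback f₂ (bmap K D)
  have hq₁ := toC_isPullback hp₁' D
  have hq₂ := toC_isPullback hp₂ D
  obtain ⟨E, hE, X, g, P, hg, hX, hP⟩ := glue_same hj ht hq₁ hq₂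
    (xmap _ l₁ ⁻¹ᵁ V₁) (xmap _ l₂ ⁻¹ᵁ V₂)
    (by rw [← e₁, ← Scheme.Hom.comp_preimage, toC_imap])
    (by rw [← e₂, ← Scheme.Hom.comp_preimage, toC_imap])
  exact ⟨E, inferInstance, inferInstance, inferInstance, tower_sub E, ft_sub hE, X, g, P, hg, hX, hP⟩

lemma HasModel.all {k K : Type u} [Field k] [Field K] [Algebra k K] {W : Scheme.{u}}
    (w : W ⟶ Spec (.of K)) [LocallyOfFiniteType w] [QuasiCompact w] [QuasiSeparated w] :
    HasModel k w := by
  have hK : IsNoetherianRing (CommRingCat.of K) := inferInstanceAs (IsNoetherianRing K)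
  have : CompactSpace W := QuasiCompact.compactSpace_of_compactSpace w
  have : QuasiSeparatedSpace W := quasiSeparatedSpace_of_quasiSeparated w
  have key : ∀ S : W.Opens, IsCompact (S : Set W) → HasModel k (S.ι ≫ w) := by
    intro S hS
    refine compact_open_induction_on (P := fun S => HasModel k (S.ι ≫ w)) S hS ?_ ?_
    · have : IsEmpty ((⊥ : W.Opens) : Scheme.{u}) := inferInstanceAs (IsEmpty (∅ : Set W))
      refine ⟨k, inferInstance, inferInstance, inferInstance, inferInstance, inferInstance,
        ∅, Scheme.emptyTo _, (isInitialOfIsEmpty).to _, inferInstance, inferInstance, ?_⟩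
      refine ⟨⟨isInitialOfIsEmpty.hom_ext _ _⟩, ⟨?_⟩⟩
      have : IsEmpty (pullback (Scheme.emptyTo (Spec (.of k))) (tmap k K) : Scheme.{u}) :=
        Function.isEmpty (pullback.fst (Scheme.emptyTo (Spec (.of k))) (tmap k K))
      exact (IsPullback.of_iso (IsPullback.of_hasPullback (Scheme.emptyTo (Spec (.of k))) (tmap k K))
        (asIso (isInitialOfIsEmpty.to _)) (Iso.refl _) (Iso.refl _) (Iso.refl _)
        (isInitialOfIsEmpty.hom_ext _ _) (isInitialOfIsEmpty.hom_ext _ _) (by simp) (by simp)).isLimit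
    · intro S hS U ih
      let V := S ⊔ (U : W.Opens)
      have hUV : (U : W.Opens) ≤ V := le_sup_right
      have hSV : S ≤ V := le_sup_left
      have hU : IsAffine (U : W.Opens) := U.2
      let j₁ := W.homOfLE hSV
      let j₂ := W.homOfLE hUV
      have : CompactSpace (pullback j₁ j₂ : Scheme.{u}) := by
        have : QuasiSeparatedSpace V := quasiSeparatedSpace_of_quasiSeparated V.ι
        have : CompactSpace S := isCompact_iff_compactSpace.1 hS
        have : QuasiCompact j₁ := inferInstance
        exact QuasiCompact.compactSpace_of_compactSpace (pullback.snd j₁ j₂)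
      have e1 : j₁ ≫ V.ι ≫ w = S.ι ≫ w := by simp [j₁]
      refine HasModel.step (j₁ := j₁) (j₂ := j₂) ?_ (IsPullback.of_hasPullback _ _) ?_
      · rintro ⟨x, hx⟩
        rcases hx with hx | hx
        · exact Or.inl ⟨⟨x, hx⟩, Subtype.ext (by simp [j₁])⟩
        · exact Or.inr ⟨⟨x, hx⟩, Subtype.ext (by simp [j₂])⟩
      · rw [e1]; exact ih
  obtain ⟨C, i1, i2, i3, i4, hC, X, g, P, hg, hX, hP⟩ := key ⊤ isCompact_univ
  refine ⟨C, i1, i2, i3, i4, hC, X, g, (Scheme.topIso W).inv ≫ P, hg, hX, ?_⟩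
  exact hP.of_iso (Scheme.topIso W) (Iso.refl _) (Iso.refl _) (Iso.refl _) (by simp) (by simp)
    (by simp) (by simp)
end Spread

end

noncomputable section
namespace Spread

lemma exists_basicOpen {T C : Type u} [CommRing T] [CommRing C] [IsDomain T] [IsDomain C]
    [IsNoetherianRing T] [Algebra T C] [Algebra.FiniteType T C]
    (hinj : Function.Injective (algebraMap T C)) :
    ∃ t : T, t ≠ 0 ∧ ∀ p : PrimeSpectrum T, t ∉ p.asIdeal →
      p ∈ Set.range (PrimeSpectrum.comap (algebraMap T C)) := by
  have hfp : (algebraMap T C).FinitePresentation :=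
    RingHom.finitePresentation_algebraMap.2 (Algebra.FinitePresentation.of_finiteType.1 inferInstance)
  obtain ⟨S, hS⟩ := PrimeSpectrum.exists_constructibleSetData_iff.2
    (PrimeSpectrum.isConstructible_range_comap hfp)
  have hbot : (⊥ : PrimeSpectrum T) ∈ S.toSet := by
    rw [hS]
    refine ⟨⊥, PrimeSpectrum.ext ?_⟩
    simpa [← RingHom.ker_eq_comap_bot] using (RingHom.injective_iff_ker_eq_bot _).1 hinj
  simp only [PrimeSpectrum.ConstructibleSetData.toSet, Set.mem_iUnion] at hbot
  obtain ⟨D, hD, h1, h2⟩ := hbot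
  have hg : ∀ x ∈ Set.range D.g, x = 0 := fun x hx => by simpa using h1 hx
  refine ⟨D.f, fun h => h2 (by simp [h]), fun p hp => ?_⟩
  rw [← hS]
  simp only [PrimeSpectrum.ConstructibleSetData.toSet, Set.mem_iUnion]
  refine ⟨D, hD, fun x hx => ?_, fun h => hp (h rfl)⟩
  rw [hg x hx]; exact p.asIdeal.zero_mem

lemma exists_point (F A : Type u) [Field F] [IsAlgClosed F] [CommRing A] [Nontrivial A] [Algebra F A]
    [Algebra.FiniteType F A] : Nonempty (A →ₐ[F] F) := by
  obtain ⟨m, hm⟩ := Ideal.exists_maximal A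
  let _ : Field (A ⧸ m) := Ideal.Quotient.field m
  have : Module.Finite F (A ⧸ m) := finite_of_finite_type_of_isJacobsonRing F (A ⧸ m)
  exact ⟨(IsAlgClosed.lift (R := F) (S := A ⧸ m) (M := F)).comp (Ideal.Quotient.mkₐ F m)⟩

lemma exists_ext {T C Ω : Type u} [CommRing T] [CommRing C] [Field Ω] [IsAlgClosed Ω]
    [Algebra T C] [Algebra.FiniteType T C] (h : T →+* Ω)
    (hp : PrimeSpectrum.comap h ⊥ ∈ Set.range (PrimeSpectrum.comap (algebraMap T C))) :
    ∃ φ : C →+* Ω, φ.comp (algebraMap T C) = h := by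
  let _ : Algebra T Ω := h.toAlgebra
  obtain ⟨q, hq⟩ := hp
  obtain ⟨z, -⟩ := Scheme.Pullback.exists_preimage_pullback (f := Spec.map (CommRingCat.ofHom (algebraMap T Ω)))
    (g := Spec.map (CommRingCat.ofHom (algebraMap T C))) (⊥ : PrimeSpectrum Ω) q hq.symm
  have : Nontrivial (Ω ⊗[T] C) := by
    have := (pullbackSpecIso T Ω C).hom z
    exact PrimeSpectrum.nonempty_iff_nontrivial.1 ⟨this⟩
  obtain ⟨ψ⟩ := exists_point Ω (Ω ⊗[T] C)
  refine ⟨(ψ.restrictScalars T).toRingHom.comp (Algebra.TensorProduct.includeRight (R := T) (A := Ω)).toRingHom, ?_⟩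
  ext x
  have := ((ψ.restrictScalars T).comp (Algebra.TensorProduct.includeRight (R := T) (A := Ω) (B := C))).commutes x
  exact this

lemma exists_pi {k K A : Type u} [Field k] [IsAlgClosed k] [Field K] [Algebra k K] [CommRing A]
    [IsDomain A] [Algebra k A] [Algebra.FiniteType k A] (t : K ⊗[k] A) (ht : t ≠ 0) :
    ∃ π : A →ₐ[k] k, Algebra.TensorProduct.productMap (AlgHom.id k K) ((Algebra.ofId k K).comp π) t ≠ 0 := by
  classical
  let b := Module.Basis.ofVectorSpace k K
  let e := TensorProduct.equivFinsuppOfBasisLeft (N := A) b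
  have he : e t ≠ 0 := by simpa using ht
  obtain ⟨i, hi⟩ := Finsupp.ne_iff.1 he
  let a := e t i
  have ha : a ≠ 0 := hi
  have : Nontrivial (Localization.Away a) := by
    refine (IsLocalization.injective (M := Submonoid.powers a) (Localization.Away a) ?_).nontrivial
    exact powers_le_nonZeroDivisors_of_noZeroDivisors ha
  have : Algebra.FiniteType A (Localization.Away a) := IsLocalization.finiteType_of_monoid_fg (.powers a) _
  have : Algebra.FiniteType k (Localization.Away a) := Algebra.FiniteType.trans (S := A) inferInstance inferInstance
  obtain ⟨ψ⟩ := exists_point k (Localization.Away a)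
  refine ⟨ψ.comp (IsScalarTower.toAlgHom k A _), fun h => ?_⟩
  set π := ψ.comp (IsScalarTower.toAlgHom k A (Localization.Away a))
  have hπ : π a ≠ 0 := by
    have : IsUnit (algebraMap A (Localization.Away a) a) := IsLocalization.Away.algebraMap_isUnit a
    exact (this.map ψ).ne_zero
  have key : ∀ s : K ⊗[k] A, b.repr (Algebra.TensorProduct.productMap (AlgHom.id k K) ((Algebra.ofId k K).comp π) s) i = π (e s i) := by
    intro s
    induction s with
    | zero => simp
    | add x y hx hy => simp [hx, hy]
    | tmul x y =>
      rw [Algebra.TensorProduct.productMap_apply_tmul, mul_comm]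
      simp [e, Algebra.ofId_apply, ← Algebra.smul_def]
      rw [mul_comm]
  apply hπ
  rw [← key, h]; simp

end Spread

end

noncomputable section
namespace Spread

lemma pb_paste {X S T U : Scheme.{u}} (f : X ⟶ S) (g : T ⟶ S) (h : U ⟶ T) :
    ∃ e : pullback f (h ≫ g) ≅ pullback (pullback.snd f g) h,
      e.hom ≫ pullback.snd _ _ = pullback.snd _ _ :=
  ⟨(pullbackLeftPullbackSndIso f g h).symm, by simp⟩

lemma coreA {K A T Ω : Type u} [CommRing K] [CommRing A] [CommRing T] [CommRing Ω]
    [IsNoetherianRing T] [Algebra T Ω] (i₁ : K →+* T) (i₂ : A →+* T)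
    {V X₁ X₂ : Scheme.{u}} {f₁ : X₁ ⟶ Spec (.of K)} {f₂ : X₂ ⟶ Spec (.of A)}
    {f : V ⟶ Spec (.of Ω)} {p₁ : V ⟶ X₁} {p₂ : V ⟶ X₂}
    (h₁ : IsPullback p₁ f f₁ (Spec.map (CommRingCat.ofHom ((algebraMap T Ω).comp i₁))))
    (h₂ : IsPullback p₂ f f₂ (Spec.map (CommRingCat.ofHom ((algebraMap T Ω).comp i₂))))
    [LocallyOfFiniteType f₁] [LocallyOfFiniteType f₂] [CompactSpace X₁] [CompactSpace X₂] :
    ∃ C : Subalgebra T Ω, C.FG ∧ ∀ (L : Type u) [CommRing L] (φ : C →+* L),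
      ∃ e : pullback f₁ (Spec.map (CommRingCat.ofHom ((φ.comp (algebraMap T C)).comp i₁))) ≅
        pullback f₂ (Spec.map (CommRingCat.ofHom ((φ.comp (algebraMap T C)).comp i₂))),
        e.hom ≫ pullback.snd _ _ = pullback.snd _ _ := by
  let j₁ := Spec.map (CommRingCat.ofHom i₁)
  let j₂ := Spec.map (CommRingCat.ofHom i₂)
  have e₁ : Spec.map (CommRingCat.ofHom ((algebraMap T Ω).comp i₁)) = tmap T Ω ≫ j₁ := by
    rw [CommRingCat.ofHom_comp, Spec.map_comp]
  have e₂ : Spec.map (CommRingCat.ofHom ((algebraMap T Ω).comp i₂)) = tmap T Ω ≫ j₂ := by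
    rw [CommRingCat.ofHom_comp, Spec.map_comp]
  rw [e₁] at h₁
  rw [e₂] at h₂
  have q₁ := IsPullback.of_right' h₁ (IsPullback.of_hasPullback f₁ j₁)
  have q₂ := IsPullback.of_right' h₂ (IsPullback.of_hasPullback f₂ j₂)
  have := compact_pullback f₁ j₁
  have := compact_pullback f₂ j₂
  have : IsLocallyNoetherian (pullback f₁ j₁) :=
    LocallyOfFiniteType.isLocallyNoetherian (pullback.snd f₁ j₁)
  have : IsLocallyNoetherian (pullback f₂ j₂) :=
    LocallyOfFiniteType.isLocallyNoetherian (pullback.snd f₂ j₂)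
  obtain ⟨C, hC, e, he, -⟩ := exists_iso q₁ q₂ (Iso.refl _) (by simp)
  refine ⟨C, hC, fun L _ φ => ?_⟩
  let s := Spec.map (CommRingCat.ofHom φ)
  have m₁ : Spec.map (CommRingCat.ofHom ((φ.comp (algebraMap T C)).comp i₁)) =
      (s ≫ bmap Ω C) ≫ j₁ := by
    rw [CommRingCat.ofHom_comp, Spec.map_comp, CommRingCat.ofHom_comp, Spec.map_comp]
  have m₂ : Spec.map (CommRingCat.ofHom ((φ.comp (algebraMap T C)).comp i₂)) =
      (s ≫ bmap Ω C) ≫ j₂ := by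
    rw [CommRingCat.ofHom_comp, Spec.map_comp, CommRingCat.ofHom_comp, Spec.map_comp]
  rw [m₁, m₂]
  obtain ⟨a₁, ha₁⟩ := pb_paste f₁ j₁ (s ≫ bmap Ω C)
  obtain ⟨b₁, hb₁⟩ := pb_paste (pullback.snd f₁ j₁) (bmap Ω C) s
  obtain ⟨a₂, ha₂⟩ := pb_paste f₂ j₂ (s ≫ bmap Ω C)
  obtain ⟨b₂, hb₂⟩ := pb_paste (pullback.snd f₂ j₂) (bmap Ω C) s
  have hs : IsIso (pullback.map (pullback.snd (pullback.snd f₁ j₁) (bmap Ω C)) s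
    (pullback.snd (pullback.snd f₂ j₂) (bmap Ω C)) s e.hom (𝟙 _) (𝟙 _) (by simp [he]) (by simp)) :=
      inferInstance
  refine ⟨a₁ ≪≫ b₁ ≪≫ asIso (pullback.map _ _ _ _ e.hom (𝟙 _) (𝟙 _) _ _) ≪≫
    b₂.symm ≪≫ a₂.symm, ?_⟩
  have ha₂' : a₂.inv ≫ pullback.snd f₂ ((s ≫ bmap Ω C) ≫ j₂) = pullback.snd _ _ := by
    rw [← ha₂, a₂.inv_hom_id_assoc]
  have hb₂' : b₂.inv ≫ pullback.snd (pullback.snd f₂ j₂) (s ≫ bmap Ω C) = pullback.snd _ _ := by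
    rw [← hb₂, b₂.inv_hom_id_assoc]
  simp [ha₂', hb₂', pullback.map, pullback.lift_snd, hb₁, ha₁]

lemma sep_descent {k Ω : Type u} [Field k] [Field Ω] [Algebra k Ω] {X : Scheme.{u}}
    (f : X ⟶ Spec (.of k)) (h : IsSeparated (pullback.snd f (tmap k Ω))) : IsSeparated f := by
  have hQ : (@Surjective ⊓ @Flat ⊓ @QuasiCompact : MorphismProperty Scheme.{u}) (tmap k Ω) := by
    refine ⟨⟨?_, ?_⟩, inferInstance⟩
    · exact ⟨PrimeSpectrum.comap_surjective_of_faithfullyFlat⟩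
    · exact (HasRingHomProperty.Spec_iff (P := @Flat)).2 (RingHom.flat_algebraMap_iff.2 inferInstance)
  have h1 : (MorphismProperty.diagonal @UniversallyClosed) (pullback.snd f (tmap k Ω)) :=
    inferInstanceAs (UniversallyClosed (pullback.diagonal (pullback.snd f (tmap k Ω))))
  have i1 : MorphismProperty.DescendsAlong @UniversallyClosed.{u}
    (@Surjective.{u} ⊓ @Flat.{u} ⊓ @QuasiCompact.{u}) := inferInstance
  have i2 : MorphismProperty.RespectsIso @UniversallyClosed.{u} := universallyClosed_respectsIso
  have i3 : MorphismProperty.IsStableUnderBaseChange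
    (@Surjective.{u} ⊓ @Flat.{u} ⊓ @QuasiCompact.{u}) := ⟨fun h hg => ⟨⟨MorphismProperty.of_isPullback (P := @Surjective) h hg.1.1,
      MorphismProperty.of_isPullback (P := @Flat) h hg.1.2⟩,
      MorphismProperty.of_isPullback (P := @QuasiCompact) h hg.2⟩⟩
  have gen : ∀ (P Q : MorphismProperty Scheme.{u}) [P.DescendsAlong Q] [P.RespectsIso]
    [Q.IsStableUnderBaseChange], P.diagonal.DescendsAlong Q := fun P Q => inferInstance
  have i4 := @gen _ _ i1 i2 i3
  have h2 : UniversallyClosed (pullback.diagonal f) :=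
    i4.of_isPullback (IsPullback.of_hasPullback f (tmap k Ω)).flip hQ h1
  exact ⟨.of_isPreimmersion _ (pullback.diagonal f).isClosedMap.isClosed_range⟩

lemma coreB {k K A Ω : Type u} [Field k] [IsAlgClosed k] [Field K] [CommRing A] [IsDomain A]
    [Field Ω] [IsAlgClosed Ω] [Algebra k K] [Algebra k A] [Algebra.FiniteType k A]
    [Algebra k Ω] [Algebra K Ω] [Algebra A Ω] [IsScalarTower k K Ω] [IsScalarTower k A Ω]
    (hinj : Function.Injective (Algebra.TensorProduct.productMap (IsScalarTower.toAlgHom k K Ω)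
      (IsScalarTower.toAlgHom k A Ω)))
    {V X₁ X₂ : Scheme.{u}} {f₁ : X₁ ⟶ Spec (.of K)} {f₂ : X₂ ⟶ Spec (.of A)}
    {f : V ⟶ Spec (.of Ω)} {p₁ : V ⟶ X₁} {p₂ : V ⟶ X₂}
    (h₁ : IsPullback p₁ f f₁ (tmap K Ω)) (h₂ : IsPullback p₂ f f₂ (tmap A Ω))
    [LocallyOfFiniteType f₁] [LocallyOfFiniteType f₂] [CompactSpace X₁] [CompactSpace X₂]
    [IsSeparated f] :
    ∃ (V₀ : Scheme.{u}) (f₀ : V₀ ⟶ Spec (CommRingCat.of k)),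
      IsSeparated f₀ ∧ LocallyOfFiniteType f₀ ∧ QuasiCompact f₀ ∧
      ∃ e₀ : V ≅ pullback f₀ (tmap k Ω), e₀.hom ≫ pullback.snd f₀ (tmap k Ω) = f := by
  let T := K ⊗[k] A
  let μ : T →ₐ[k] Ω := Algebra.TensorProduct.productMap (IsScalarTower.toAlgHom k K Ω)
      (IsScalarTower.toAlgHom k A Ω)
  let i₁ : K →ₐ[k] T := Algebra.TensorProduct.includeLeft
  let i₂ : A →ₐ[k] T := Algebra.TensorProduct.includeRight
  let _ : Algebra T Ω := μ.toRingHom.toAlgebra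
  have hμ : Function.Injective (algebraMap T Ω) := hinj
  have c₁ : (algebraMap T Ω).comp i₁.toRingHom = algebraMap K Ω := by
    ext x; change Algebra.TensorProduct.productMap _ _ (x ⊗ₜ[k] (1 : A)) = _
    rw [Algebra.TensorProduct.productMap_apply_tmul]; simp
  have c₂ : (algebraMap T Ω).comp i₂.toRingHom = algebraMap A Ω := by
    ext x; change Algebra.TensorProduct.productMap _ _ ((1 : K) ⊗ₜ[k] x) = _
    rw [Algebra.TensorProduct.productMap_apply_tmul]; simp
  have : IsDomain T := hμ.isDomain
  have : Algebra.FiniteType K T := inferInstance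
  have : IsNoetherianRing T := Algebra.FiniteType.isNoetherianRing K T
  obtain ⟨C, hC, H⟩ := coreA i₁.toRingHom i₂.toRingHom (f := f) (f₁ := f₁) (f₂ := f₂)
    (p₁ := p₁) (p₂ := p₂) (by rw [c₁]; exact h₁) (by rw [c₂]; exact h₂)
  have : Algebra.FiniteType T C := (Subalgebra.fg_iff_finiteType C).1 hC
  have hTC : Function.Injective (algebraMap T C) := by
    refine Function.Injective.of_comp (f := algebraMap C Ω) ?_
    exact hμ
  obtain ⟨t, ht, htp⟩ := exists_basicOpen hTC
  obtain ⟨π, hπ⟩ := exists_pi t ht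
  let ρ : T →ₐ[k] K := Algebra.TensorProduct.productMap (AlgHom.id k K) ((Algebra.ofId k K).comp π)
  let h : T →+* Ω := (algebraMap K Ω).comp ρ.toRingHom
  obtain ⟨φ, hφ⟩ := exists_ext (C := C) h (htp _ (fun hm => hπ (by
    have : h t = 0 := by simpa using hm
    exact (map_eq_zero (algebraMap K Ω)).1 this)))
  have d₁ : h.comp i₁.toRingHom = algebraMap K Ω := by
    ext x; change algebraMap K Ω (Algebra.TensorProduct.productMap _ _ (x ⊗ₜ[k] (1 : A))) = _
    rw [Algebra.TensorProduct.productMap_apply_tmul]; simp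
  have d₂ : h.comp i₂.toRingHom = (algebraMap k Ω).comp π.toRingHom := by
    ext x
    change algebraMap K Ω (Algebra.TensorProduct.productMap _ _ ((1 : K) ⊗ₜ[k] x)) =
      algebraMap k Ω (π x)
    rw [Algebra.TensorProduct.productMap_apply_tmul]
    simp [Algebra.ofId_apply, ← IsScalarTower.algebraMap_apply]
  have H' := H Ω φ
  rw [hφ, d₁, d₂] at H'
  obtain ⟨e, he⟩ := H'
  let s := Spec.map (CommRingCat.ofHom π.toRingHom)
  have m : Spec.map (CommRingCat.ofHom ((algebraMap k Ω).comp π.toRingHom)) = tmap k Ω ≫ s := by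
    rw [CommRingCat.ofHom_comp, Spec.map_comp]
  have H2 := pb_paste f₂ s (tmap k Ω)
  rw [← m] at H2
  obtain ⟨a, ha⟩ := H2
  let E : V ≅ pullback (pullback.snd f₂ s) (tmap k Ω) := h₁.isoPullback ≪≫ e ≪≫ a
  have hf : E.hom ≫ pullback.snd (pullback.snd f₂ s) (tmap k Ω) = f := by
    change (h₁.isoPullback.hom ≫ e.hom ≫ a.hom) ≫ _ = f
    rw [Category.assoc, Category.assoc, ha, he]
    exact h₁.isoPullback_hom_snd
  have := compact_pullback f₂ s
  refine ⟨pullback f₂ s, pullback.snd f₂ s, ?_, inferInstance, inferInstance, _, hf⟩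
  refine sep_descent (Ω := Ω) _ ?_
  have h5 : pullback.snd (pullback.snd f₂ s) (tmap k Ω) = E.inv ≫ f :=
    (Iso.eq_inv_comp _).2 hf
  rw [h5]
  infer_instance

end Spread

end

noncomputable section
namespace Spread

lemma sq_of_iso {K Ω : Type u} [CommRing K] [CommRing Ω] [Algebra K Ω] {V V₁ : Scheme.{u}}
    {f : V ⟶ Spec (.of Ω)} {f₁ : V₁ ⟶ Spec (.of K)} (e₁ : V ≅ pullback f₁ (tmap K Ω))
    (he₁ : e₁.hom ≫ pullback.snd f₁ (tmap K Ω) = f) :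
    IsPullback (e₁.hom ≫ pullback.fst f₁ (tmap K Ω)) f f₁ (tmap K Ω) :=
  (IsPullback.of_hasPullback f₁ (tmap K Ω)).of_iso e₁.symm (Iso.refl _) (Iso.refl _) (Iso.refl _)
    (by simp) (by simp [← he₁]) (by simp) (by simp)

lemma model_sub {k K : Type u} [Field k] [Field K] [Algebra k K] {W : Scheme.{u}}
    (w : W ⟶ Spec (.of K)) [LocallyOfFiniteType w] [QuasiCompact w] [QuasiSeparated w] :
    ∃ A : Subalgebra k K, Algebra.FiniteType k A ∧ ∃ (X : Scheme.{u}) (g : X ⟶ Spec (.of A))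
      (P : W ⟶ X), LocallyOfFiniteType g ∧ CompactSpace X ∧ IsPullback P w g (tmap A K) := by
  obtain ⟨C, _, _, _, _, hC, X, g, P, hg, hX, hP⟩ := HasModel.all (k := k) w
  let r := (IsScalarTower.toAlgHom k C K).rangeRestrict
  let s := Spec.map (CommRingCat.ofHom r.toRingHom)
  have hs : tmap C K = tmap (IsScalarTower.toAlgHom k C K).range K ≫ s := by
    rw [← Spec.map_comp, ← CommRingCat.ofHom_comp]; try rfl
  rw [hs] at hP
  have := compact_pullback g s
  exact ⟨(IsScalarTower.toAlgHom k C K).range,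
    Algebra.FiniteType.of_surjective r (AlgHom.rangeRestrict_surjective _),
    pullback g s, pullback.snd g s, _, inferInstance, inferInstance,
    IsPullback.of_right' hP (IsPullback.of_hasPullback g s)⟩

end Spread
end

/-- Let `Ω ⊇ k` be algebraically closed fields and let `V` be an algebraic
scheme (separated and of finite type) over `Ω`.  If `V` has models over two
subfields `K₁, K₂` of `Ω` that are finitely generated over `k` and linearly
disjoint over `k`, then `V` has a model over `k`. -/
theorem exists_model_of_two_linearlyDisjoint_models
    {k Ω : Type u} [Field k] [IsAlgClosed k] [Field Ω] [IsAlgClosed Ω]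
    [Algebra k Ω]
    (K₁ K₂ : IntermediateField k Ω) (hK₁ : K₁.FG) (hK₂ : K₂.FG)
    (hdisj : Function.Injective (Algebra.TensorProduct.productMap K₁.val K₂.val))
    (V : Scheme.{u}) (f : V ⟶ Spec (CommRingCat.of Ω))
    [IsSeparated f] [LocallyOfFiniteType f] [QuasiCompact f]
    (V₁ : Scheme.{u}) (f₁ : V₁ ⟶ Spec (CommRingCat.of K₁))
    [IsSeparated f₁] [LocallyOfFiniteType f₁] [QuasiCompact f₁]
    (e₁ : V ≅ pullback f₁ (Spec.map (CommRingCat.ofHom (algebraMap K₁ Ω))))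
    (he₁ : e₁.hom ≫ pullback.snd f₁ (Spec.map (CommRingCat.ofHom (algebraMap K₁ Ω))) = f)
    (V₂ : Scheme.{u}) (f₂ : V₂ ⟶ Spec (CommRingCat.of K₂))
    [IsSeparated f₂] [LocallyOfFiniteType f₂] [QuasiCompact f₂]
    (e₂ : V ≅ pullback f₂ (Spec.map (CommRingCat.ofHom (algebraMap K₂ Ω))))
    (he₂ : e₂.hom ≫ pullback.snd f₂ (Spec.map (CommRingCat.ofHom (algebraMap K₂ Ω))) = f) :
    ∃ (V₀ : Scheme.{u}) (f₀ : V₀ ⟶ Spec (CommRingCat.of k)),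
      IsSeparated f₀ ∧ LocallyOfFiniteType f₀ ∧ QuasiCompact f₀ ∧
      ∃ e₀ : V ≅ pullback f₀ (Spec.map (CommRingCat.ofHom (algebraMap k Ω))),
        e₀.hom ≫ pullback.snd f₀ (Spec.map (CommRingCat.ofHom (algebraMap k Ω))) = f := by
  have hc₁ : CompactSpace V₁ := QuasiCompact.compactSpace_of_compactSpace f₁
  have s₁ : IsPullback (e₁.hom ≫ pullback.fst f₁ (Spread.tmap K₁ Ω)) f f₁ (Spread.tmap K₁ Ω) :=
    Spread.sq_of_iso e₁ he₁
  have s₂ : IsPullback (e₂.hom ≫ pullback.fst f₂ (Spread.tmap K₂ Ω)) f f₂ (Spread.tmap K₂ Ω) :=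
    Spread.sq_of_iso e₂ he₂
  obtain ⟨A, hA, X, g, P, hg, hX, hP⟩ := Spread.model_sub (k := k) f₂
  have : IsScalarTower k A Ω := IsScalarTower.of_algebraMap_eq fun x => rfl
  have hm : Spread.tmap K₂ Ω ≫ Spread.tmap A K₂ = Spread.tmap A Ω := by
    rw [← Spec.map_comp, ← CommRingCat.ofHom_comp]; try rfl
  have h₂ := s₂.paste_horiz hP
  rw [hm] at h₂
  refine Spread.coreB (k := k) (K := K₁) (A := A) ?_ s₁ h₂
  have hfac : (Algebra.TensorProduct.productMap (IsScalarTower.toAlgHom k K₁ Ω)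
      (IsScalarTower.toAlgHom k A Ω)) = (Algebra.TensorProduct.productMap K₁.val K₂.val).comp
        (Algebra.TensorProduct.map (AlgHom.id k K₁) A.val) := by
    apply Algebra.TensorProduct.ext'
    intro a b
    rw [AlgHom.comp_apply, Algebra.TensorProduct.map_tmul,
      Algebra.TensorProduct.productMap_apply_tmul, Algebra.TensorProduct.productMap_apply_tmul]
    rfl
  rw [hfac]
  exact hdisj.comp (Module.Flat.lTensor_preserves_injective_linearMap (M := K₁)
    A.val.toLinearMap Subtype.val_injective)
end

section
/- Let Ω be an algebraically closed field extension of a field k such that Ω has infinite transcendence degree over k and k is algebraically closed in Ω (every element of Ω algebraic over k lies in k). Then for every intermediate field K with k ⊆ K ⊆ Ω that is finitely generated as a field extension of k, there exists a field automorphism σ of Ω fixing k pointwise such that K and σ(K) are linearly disjoint over k, i.e., the map K ⊗ₖ σ(K) → Ω, a ⊗ b ↦ ab, is injective. -/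
open scoped TensorProduct

theorem aux_point {k A : Type*} [Field k] [IsAlgClosed k] [CommRing A] [IsDomain A] [Algebra k A]
    [Algebra.FiniteType k A] (b : A) (hb : b ≠ 0) : ∃ φ : A →ₐ[k] k, φ b ≠ 0 := by
  have hJ : IsJacobsonRing A := isJacobsonRing_of_finiteType (A := k)
  have h1 : (⊥ : Ideal A).jacobson = ⊥ := by
    rw [← Ideal.radical_eq_jacobson]
    exact (Ideal.isPrime_bot (α := A)).isRadical.radical
  have h2 : b ∉ (⊥ : Ideal A).jacobson := by rw [h1]; simpa using hb
  obtain ⟨m, hm, hbm⟩ : ∃ m : Ideal A, m.IsMaximal ∧ b ∉ m := by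
    by_contra! h
    exact h2 (by
      rw [Ideal.jacobson, Ideal.mem_sInf]
      rintro J ⟨_, hJ⟩
      exact h J hJ)
  let := Ideal.Quotient.field m
  have : Module.Finite k (A ⧸ m) := finite_of_finite_type_of_isJacobsonRing k (A ⧸ m)
  have hbij : Function.Bijective (algebraMap k (A ⧸ m)) :=
    IsAlgClosed.algebraMap_bijective_of_isIntegral
  let e : k ≃ₐ[k] (A ⧸ m) := AlgEquiv.ofBijective (Algebra.ofId k _) hbij
  refine ⟨e.symm.toAlgHom.comp (Ideal.Quotient.mkₐ k m), ?_⟩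
  intro h
  have : (Ideal.Quotient.mk m) b = 0 := by
    simpa using h
  exact hbm (Ideal.Quotient.eq_zero_iff_mem.mp this)

theorem aux_domain {k K L : Type*} [Field k] [IsAlgClosed k] [Field K] [Field L] [Algebra k K]
    [Algebra k L] : IsDomain (L ⊗[k] K) := by
  have : Nontrivial (L ⊗[k] K) := inferInstance
  suffices NoZeroDivisors (L ⊗[k] K) from NoZeroDivisors.to_isDomain _
  refine ⟨fun {x y} hxy => ?_⟩
  by_contra! hne
  let b := Module.Basis.ofVectorSpace k K
  let B := b.baseChange L
  obtain ⟨i, hi⟩ : ∃ i, B.repr x i ≠ 0 := by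
    by_contra! h; exact hne.1 (B.repr.map_eq_zero_iff.mp (Finsupp.ext h))
  obtain ⟨j, hj⟩ : ∃ j, B.repr y j ≠ 0 := by
    by_contra! h; exact hne.2 (B.repr.map_eq_zero_iff.mp (Finsupp.ext h))
  classical
  let S : Finset L := (B.repr x).frange ∪ (B.repr y).frange
  let A := Algebra.adjoin k (S : Set L)
  have hfg : Algebra.FiniteType k A :=
    (Subalgebra.fg_iff_finiteType _).mp (Subalgebra.fg_adjoin_finset S)
  let inc : A ⊗[k] K →ₐ[k] L ⊗[k] K := Algebra.TensorProduct.map A.val (AlgHom.id k K)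
  have hinc : Function.Injective inc :=
    Module.Flat.rTensor_preserves_injective_linearMap (M := K) A.val.toLinearMap
      Subtype.val_injective
  let BA := b.baseChange A
  have hrep : ∀ z i, ((BA.repr z i : A) : L) = B.repr (inc z) i := by
    intro z i
    induction z with
    | zero => simp
    | add u v hu hv => simp [hu, hv]
    | tmul u v => simp [BA, B, inc]
  have lift : ∀ z : L ⊗[k] K, (∀ i, B.repr z i ∈ A) → ∃ z' : A ⊗[k] K, inc z' = z := by
    intro z hz
    rw [← B.linearCombination_repr z, Finsupp.linearCombination_apply, Finsupp.sum]
    refine ⟨∑ i ∈ (B.repr z).support, (⟨B.repr z i, hz i⟩ : A) ⊗ₜ b i, ?_⟩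
    rw [map_sum]
    refine Finset.sum_congr rfl fun i _ => ?_
    simp [inc, B, TensorProduct.smul_tmul']
  have memA : ∀ z : L ⊗[k] K, (B.repr z).frange ⊆ S → ∀ i, B.repr z i ∈ A := by
    intro z hz i
    by_cases h : B.repr z i = 0
    · rw [h]; exact zero_mem _
    · exact Algebra.subset_adjoin (hz (Finsupp.mem_frange.mpr ⟨h, i, rfl⟩))
  obtain ⟨x', hx'⟩ := lift x (memA x Finset.subset_union_left)
  obtain ⟨y', hy'⟩ := lift y (memA y Finset.subset_union_right)
  have hxy' : x' * y' = 0 := hinc (by rw [map_mul, hx', hy', hxy, map_zero])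
  rw [← hx', ← hrep] at hi
  rw [← hy', ← hrep] at hj
  obtain ⟨φ, hφ⟩ := aux_point (k := k) (BA.repr x' i * BA.repr y' j)
    (mul_ne_zero (fun h => hi (by rw [h]; rfl)) (fun h => hj (by rw [h]; rfl)))
  let ψ : A ⊗[k] K →ₐ[k] K :=
    Algebra.TensorProduct.lift ((Algebra.ofId k K).comp φ) (AlgHom.id k K) (fun _ _ => .all _ _)
  have hψ : ∀ z i, b.repr (ψ z) i = φ (BA.repr z i) := by
    intro z i
    induction z with
    | zero => simp
    | add u v hu hv => simp [hu, hv]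
    | tmul u v =>
      simp only [ψ, BA, Algebra.TensorProduct.lift_tmul, AlgHom.comp_apply, AlgHom.id_apply,
        Algebra.ofId_apply, ← Algebra.smul_def, map_smul, Module.Basis.baseChange_repr_tmul,
        Finsupp.smul_apply, smul_eq_mul]
      ring
  have h0 : ψ x' * ψ y' = 0 := by rw [← map_mul, hxy', map_zero]
  rw [map_mul] at hφ
  rcases mul_eq_zero.mp h0 with h | h
  · exact hφ (by rw [← hψ x', h]; simp)
  · exact hφ (by rw [← hψ y', h]; simp)

theorem aux_alg_s15 {R S A B : Type*} [CommRing R] [CommRing S] [CommRing A] [CommRing B]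
    [Algebra R A] [Algebra S B] (f : R →+* S) (hf : Function.Injective f) (g : A →+* B)
    (h : ∀ r, g (algebraMap R A r) = algebraMap S B (f r)) (a : A) (ha : IsAlgebraic R a) :
    IsAlgebraic S (g a) := by
  obtain ⟨p, hp, hpa⟩ := ha
  refine ⟨p.map f, (Polynomial.map_ne_zero_iff hf).mpr hp, ?_⟩
  rw [Polynomial.aeval_def, Polynomial.eval₂_map]
  have : (algebraMap S B).comp f = g.comp (algebraMap R A) := by ext r; simp [h]
  rw [this, ← Polynomial.hom_eval₂, ← Polynomial.aeval_def, hpa, map_zero]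

theorem aux_inj {k K Ω ι : Type*} [Field k] [IsAlgClosed k] [Field K] [Field Ω] [Algebra k K]
    [Algebra k Ω] (t : ι → K) (ht : IsTranscendenceBasis k t) (f g : K →ₐ[k] Ω)
    (hfg : AlgebraicIndependent k (Sum.elim (f ∘ t) (g ∘ t))) :
    Function.Injective (Algebra.TensorProduct.productMap f g) := by
  have hdom : IsDomain (K ⊗[k] K) := aux_domain
  have halg := ht.isAlgebraic
  let s : ι ⊕ ι → K ⊗[k] K := Sum.elim (fun i => t i ⊗ₜ 1) (fun i => 1 ⊗ₜ t i)
  let q : MvPolynomial (ι ⊕ ι) k →ₐ[k] K ⊗[k] K := MvPolynomial.aeval s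
  let : Algebra (MvPolynomial (ι ⊕ ι) k) (K ⊗[k] K) := q.toRingHom.toAlgebra
  have hmap : ∀ r, algebraMap (MvPolynomial (ι ⊕ ι) k) (K ⊗[k] K) r = q r := fun _ => rfl
  have hcomp : (Algebra.TensorProduct.productMap f g).comp q
      = MvPolynomial.aeval (Sum.elim (f ∘ t) (g ∘ t)) := by
    ext i; rcases i with i | i <;> simp [q, s]
  have hl : ∀ a : K, IsAlgebraic (MvPolynomial (ι ⊕ ι) k) (a ⊗ₜ[k] (1 : K)) := fun a =>
    aux_alg_s15 (((MvPolynomial.rename Sum.inl).comp ht.1.aevalEquiv.symm.toAlgHom :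
      Algebra.adjoin k (Set.range t) →ₐ[k] MvPolynomial (ι ⊕ ι) k) : _ →+* _)
      ((MvPolynomial.rename_injective _ Sum.inl_injective).comp ht.1.aevalEquiv.symm.injective)
      (Algebra.TensorProduct.includeLeft : K →ₐ[k] K ⊗[k] K).toRingHom
      (by
        intro r
        obtain ⟨r, rfl⟩ := ht.1.aevalEquiv.surjective r
        rw [hmap]
        have : q.comp (MvPolynomial.rename Sum.inl) = (Algebra.TensorProduct.includeLeft :
          K →ₐ[k] K ⊗[k] K).comp (MvPolynomial.aeval t) := by
          ext i; simp [q, s]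
        have e1 : ht.1.aevalEquiv.symm (ht.1.aevalEquiv r) = r := by simp
        change (Algebra.TensorProduct.includeLeft : K →ₐ[k] K ⊗[k] K)
          (algebraMap _ K (ht.1.aevalEquiv r)) = q (MvPolynomial.rename Sum.inl
            (ht.1.aevalEquiv.symm (ht.1.aevalEquiv r)))
        rw [e1, ht.1.algebraMap_aevalEquiv]
        exact (DFunLike.congr_fun this r).symm) a (halg.isAlgebraic a)
  have hr : ∀ a : K, IsAlgebraic (MvPolynomial (ι ⊕ ι) k) ((1 : K) ⊗ₜ[k] a) := fun a =>
    aux_alg_s15 (((MvPolynomial.rename Sum.inr).comp ht.1.aevalEquiv.symm.toAlgHom :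
      Algebra.adjoin k (Set.range t) →ₐ[k] MvPolynomial (ι ⊕ ι) k) : _ →+* _)
      ((MvPolynomial.rename_injective _ Sum.inr_injective).comp ht.1.aevalEquiv.symm.injective)
      (Algebra.TensorProduct.includeRight : K →ₐ[k] K ⊗[k] K).toRingHom
      (by
        intro r
        obtain ⟨r, rfl⟩ := ht.1.aevalEquiv.surjective r
        rw [hmap]
        have : q.comp (MvPolynomial.rename Sum.inr) = (Algebra.TensorProduct.includeRight :
          K →ₐ[k] K ⊗[k] K).comp (MvPolynomial.aeval t) := by
          ext i; simp [q, s]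
        have e1 : ht.1.aevalEquiv.symm (ht.1.aevalEquiv r) = r := by simp
        change (Algebra.TensorProduct.includeRight : K →ₐ[k] K ⊗[k] K)
          (algebraMap _ K (ht.1.aevalEquiv r)) = q (MvPolynomial.rename Sum.inr
            (ht.1.aevalEquiv.symm (ht.1.aevalEquiv r)))
        rw [e1, ht.1.algebraMap_aevalEquiv]
        exact (DFunLike.congr_fun this r).symm) a (halg.isAlgebraic a)
  have hall : ∀ z : K ⊗[k] K, IsAlgebraic (MvPolynomial (ι ⊕ ι) k) z := by
    intro z
    induction z with
    | zero => exact isAlgebraic_zero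
    | add u v hu hv => exact hu.add hv
    | tmul u v =>
      have := (hl u).mul (hr v)
      simpa using this
  rw [injective_iff_map_eq_zero]
  intro z hz
  by_contra hz0
  obtain ⟨r, hr0, c, hc⟩ := (hall z).exists_nonzero_dvd (mem_nonZeroDivisors_of_ne_zero hz0)
  apply hr0
  apply hfg
  have h2 := DFunLike.congr_fun hcomp r
  rw [map_zero, ← h2, AlgHom.comp_apply, ← hmap, hc, map_mul, hz, zero_mul]

theorem aux_ext {k Ω ι : Type*} [Field k] [Field Ω] [Algebra k Ω] [IsAlgClosed Ω]
    (v : ι → Ω) (hv : IsTranscendenceBasis k v) (e : Equiv.Perm ι) :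
    ∃ σ : Ω ≃ₐ[k] Ω, ∀ i, σ (v i) = v (e i) := by
  let A := Algebra.adjoin k (Set.range v)
  let : IsAlgClosure A Ω := IsAlgClosed.isAlgClosure_of_transcendence_basis v hv
  let E : A ≃ₐ[k] A := (hv.1.aevalEquiv.symm.trans (MvPolynomial.renameEquiv k e)).trans
    hv.1.aevalEquiv
  let τ : Ω ≃+* Ω := IsAlgClosure.equivOfEquiv Ω Ω E.toRingEquiv
  have hτ : ∀ a : A, τ (algebraMap A Ω a) = algebraMap A Ω (E a) := fun a =>
    IsAlgClosure.equivOfEquiv_algebraMap Ω Ω E.toRingEquiv a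
  refine ⟨AlgEquiv.ofRingEquiv (f := τ) ?_, ?_⟩
  · intro x
    have := hτ (algebraMap k A x)
    rw [E.commutes] at this
    exact this
  · intro i
    have := hτ (hv.1.aevalEquiv (MvPolynomial.X i))
    have hE : E (hv.1.aevalEquiv (MvPolynomial.X i)) = hv.1.aevalEquiv (MvPolynomial.X (e i)) := by
      simp [E]
    rw [hE, hv.1.algebraMap_aevalEquiv, hv.1.algebraMap_aevalEquiv, MvPolynomial.aeval_X,
      MvPolynomial.aeval_X] at this
    exact this

theorem exists_aut_linearlyDisjoint
    {k Ω : Type*} [Field k] [Field Ω] [Algebra k Ω] [IsAlgClosed Ω]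
    (htr : ∃ s : Set Ω, s.Infinite ∧ AlgebraicIndependent k ((↑) : s → Ω))
    (halg : ∀ a : Ω, IsAlgebraic k a → a ∈ Set.range (algebraMap k Ω))
    (K : IntermediateField k Ω) (hK : K.FG) :
    ∃ σ : Ω ≃ₐ[k] Ω,
      Function.Injective
        (Algebra.TensorProduct.productMap K.val (K.map (σ : Ω →ₐ[k] Ω)).val) := by
  have hk : IsAlgClosed k := by
    refine IsAlgClosed.of_exists_root k fun p hp hirr => ?_
    obtain ⟨x, hx⟩ := IsAlgClosed.exists_aeval_eq_zero Ω p hirr.degree_pos.ne'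
    obtain ⟨y, rfl⟩ := halg x ⟨p, hp.ne_zero, hx⟩
    refine ⟨y, (algebraMap k Ω).injective ?_⟩
    rw [map_zero, ← hx, Polynomial.aeval_algebraMap_apply, Polynomial.coe_aeval_eq_eval]
  have : Algebra.EssFiniteType k K := IntermediateField.essFiniteType_iff.mpr hK
  obtain ⟨T, hT⟩ := exists_finset_isTranscendenceBasis k K
  have hTΩ : AlgebraicIndependent k (fun x : T => ((x : K) : Ω)) :=
    hT.1.map' (f := K.val) Subtype.val_injective
  obtain ⟨B, hTB, hB⟩ := exists_isTranscendenceBasis_superset (R := k)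
    (s := Set.range (fun x : T => ((x : K) : Ω))) hTΩ.coe_range
  have hBinf : Infinite B := by
    obtain ⟨s, hs, hsi⟩ := htr
    by_contra hfin
    rw [not_infinite_iff_finite] at hfin
    have := FinTrdeg.of_isTranscendenceBasis hB
    exact hs (finite_of_algebraicIndependent hsi)
  let f : T → B := fun x => ⟨((x : K) : Ω), hTB ⟨x, rfl⟩⟩
  have hf : Function.Injective f := fun x y h => by
    have : ((x : K) : Ω) = ((y : K) : Ω) := congrArg (fun z : B => (z : Ω)) h
    exact Subtype.ext (Subtype.ext this)
  have hCinf : Infinite ((Set.range f)ᶜ : Set B) :=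
    (Set.finite_range f).infinite_compl.to_subtype
  let g' : T ↪ ((Set.range f)ᶜ : Set B) := Classical.choice (by
    obtain ⟨n, ⟨e⟩⟩ := Finite.exists_equiv_fin T
    exact ⟨e.toEmbedding.trans
      (Fin.valEmbedding.trans (Infinite.natEmbedding _))⟩)
  let g : T → B := fun x => (g' x : B)
  have hg : Function.Injective g := Subtype.val_injective.comp g'.injective
  obtain ⟨e, he⟩ := Equiv.Perm.exists_extending_pair f g hf hg
  obtain ⟨σ, hσ⟩ := aux_ext _ hB e
  refine ⟨σ, ?_⟩
  have hinj : Function.Injective (Sum.elim f g) :=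
    hf.sumElim hg fun a b h => (g' b).2 ⟨a, h⟩
  have hind := hB.1.comp _ hinj
  have key := aux_inj (Subtype.val : T → K) hT K.val ((σ : Ω →ₐ[k] Ω).comp K.val) (by
    convert hind using 1
    ext i
    rcases i with i | i
    · rfl
    · have := hσ (f i)
      rw [he] at this
      exact this)
  let m : K ≃ₐ[k] K.map (σ : Ω →ₐ[k] Ω) := K.equivMap _
  let M := Algebra.TensorProduct.congr (AlgEquiv.refl : K ≃ₐ[k] K) m
  have hcomp : (Algebra.TensorProduct.productMap K.val (K.map (σ : Ω →ₐ[k] Ω)).val).comp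
      M.toAlgHom = Algebra.TensorProduct.productMap K.val ((σ : Ω →ₐ[k] Ω).comp K.val) := by
    ext x <;> simp [M, m]
  intro x y hxy
  obtain ⟨x, rfl⟩ := M.surjective x
  obtain ⟨y, rfl⟩ := M.surjective y
  congr 1
  apply key
  rw [← hcomp]
  exact hxy
end

section
/- Let f : A → B be a faithfully flat homomorphism of commutative rings. Then: (i) f is injective; (ii) the kernel of the map B → B ⊗_A B, b ↦ b ⊗ 1 − 1 ⊗ b, equals the image of f; and (iii) the kernel of the map d¹ : B ⊗_A B → B ⊗_A B ⊗_A B defined by d¹(b₀ ⊗ b₁) = 1 ⊗ b₀ ⊗ b₁ − b₀ ⊗ 1 ⊗ b₁ + b₀ ⊗ b₁ ⊗ 1 equals the image of the map d⁰ : B → B ⊗_A B, b ↦ 1 ⊗ b − b ⊗ 1. -/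
open scoped TensorProduct

/-- Contracting homotopy criterion. -/
theorem exact_of_homotopy_aux {A : Type*} (B : Type*) [CommRing A] [CommRing B] [Algebra A B]
    [Module.FaithfullyFlat A B] {M N P : Type*} [AddCommGroup M] [AddCommGroup N] [AddCommGroup P]
    [Module A M] [Module A N] [Module A P] (f : M →ₗ[A] N) (g : N →ₗ[A] P)
    (h0 : g ∘ₗ f = 0)
    (s : B ⊗[A] N →ₗ[A] B ⊗[A] M) (t : B ⊗[A] P →ₗ[A] B ⊗[A] N)
    (h : f.lTensor B ∘ₗ s + t ∘ₗ g.lTensor B = LinearMap.id) :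
    LinearMap.ker g = LinearMap.range f := by
  refine LinearMap.exact_iff.mp (Module.FaithfullyFlat.lTensor_reflects_exact A B f g ?_)
  intro y
  constructor
  · intro hy
    have := LinearMap.congr_fun h y
    simp only [LinearMap.add_apply, LinearMap.comp_apply, hy, map_zero, add_zero,
      LinearMap.id_apply] at this
    exact ⟨s y, this⟩
  · rintro ⟨x, rfl⟩
    rw [← LinearMap.comp_apply, ← LinearMap.lTensor_comp, h0]
    simp

/-- `x ⊗ (b ⊗ m) ↦ x b ⊗ m`. -/
noncomputable def contractAux (A B M : Type*) [CommRing A] [CommRing B] [Algebra A B]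
    [AddCommGroup M] [Module A M] : B ⊗[A] (B ⊗[A] M) →ₗ[A] B ⊗[A] M :=
  (LinearMap.mul' A B).rTensor M ∘ₗ (TensorProduct.assoc A B B M).symm.toLinearMap

theorem contractAux_tmul {A B M : Type*} [CommRing A] [CommRing B] [Algebra A B]
    [AddCommGroup M] [Module A M] (x b : B) (m : M) :
    contractAux A B M (x ⊗ₜ (b ⊗ₜ m)) = (x * b) ⊗ₜ m := by
  simp [contractAux]

/-- Let `A → B` be a faithfully flat homomorphism of commutative rings.  Then
(i) `A → B` is injective; (ii) the kernel of `b ↦ b ⊗ 1 - 1 ⊗ b : B → B ⊗[A] B`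
is the image of `A`; (iii) the kernel of
`d¹ : B ⊗[A] B → B ⊗[A] B ⊗[A] B`, `b₀ ⊗ b₁ ↦ 1⊗b₀⊗b₁ - b₀⊗1⊗b₁ + b₀⊗b₁⊗1`,
is the image of `d⁰ : B → B ⊗[A] B`, `b ↦ 1⊗b - b⊗1`. -/
theorem amitsur_exactness_low_degrees
    (A B : Type u) [CommRing A] [CommRing B] [Algebra A B]
    [Module.FaithfullyFlat A B] :
    Function.Injective (algebraMap A B) ∧
    LinearMap.ker ((TensorProduct.mk A B B).flip 1 - TensorProduct.mk A B B 1) =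
      LinearMap.range (Algebra.linearMap A B) ∧
    LinearMap.ker
        ((TensorProduct.mk A B (B ⊗[A] B) 1 :
            B ⊗[A] B →ₗ[A] B ⊗[A] (B ⊗[A] B))
          - TensorProduct.map LinearMap.id (TensorProduct.mk A B B 1)
          + TensorProduct.map LinearMap.id ((TensorProduct.mk A B B).flip 1)) =
      LinearMap.range (TensorProduct.mk A B B 1 - (TensorProduct.mk A B B).flip 1) := by
  refine ⟨FaithfulSMul.algebraMap_injective A B, ?_, ?_⟩
  · refine exact_of_homotopy_aux B _ _ ?_
      ((TensorProduct.mk A B A).flip 1 ∘ₗ LinearMap.mul' A B) (-contractAux A B B) ?_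
    · ext
      simp
    · refine TensorProduct.ext' fun x b => ?_
      simp [contractAux_tmul, TensorProduct.tmul_sub]
  · refine exact_of_homotopy_aux B _ _ ?_ (contractAux A B B) (contractAux A B (B ⊗[A] B)) ?_
    · ext b
      simp [TensorProduct.tmul_sub]
    · ext x b c
      simp [contractAux_tmul, TensorProduct.tmul_sub, TensorProduct.tmul_add]
end

section
/- Let f : A → B be a faithfully flat homomorphism of commutative rings and let M be an A-module. Then: (i) the map M → B ⊗_A M, m ↦ 1 ⊗ m, is injective; and (ii) the kernel of the map B ⊗_A M → B ⊗_A B ⊗_A M sending b ⊗ m to 1 ⊗ b ⊗ m − b ⊗ 1 ⊗ m equals the image of the map M → B ⊗_A M, m ↦ 1 ⊗ m. -/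
open scoped TensorProduct

/-- Let `A → B` be a faithfully flat homomorphism of commutative rings and `M`
an `A`-module.  Then (i) the map `M → B ⊗[A] M`, `m ↦ 1 ⊗ m`, is injective, and
(ii) the kernel of `B ⊗[A] M → B ⊗[A] (B ⊗[A] M)`,
`b ⊗ m ↦ 1 ⊗ b ⊗ m - b ⊗ 1 ⊗ m`, equals the image of `m ↦ 1 ⊗ m`. -/
theorem amitsur_exactness_module
    (A B M : Type u) [CommRing A] [CommRing B] [Algebra A B]
    [Module.FaithfullyFlat A B] [AddCommGroup M] [Module A M] :
    Function.Injective (TensorProduct.mk A B M 1) ∧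
    LinearMap.ker
        ((TensorProduct.mk A B (B ⊗[A] M) 1 :
            B ⊗[A] M →ₗ[A] B ⊗[A] (B ⊗[A] M))
          - TensorProduct.map LinearMap.id (TensorProduct.mk A B M 1)) =
      LinearMap.range (TensorProduct.mk A B M 1) := by
  refine ⟨Module.FaithfullyFlat.tensorProduct_mk_injective M, ?_⟩
  rw [← LinearMap.exact_iff]
  apply Module.FaithfullyFlat.lTensor_reflects_exact A B
  let s₁ : B ⊗[A] (B ⊗[A] M) →ₗ[A] B ⊗[A] M :=
    (LinearMap.mul' A B).rTensor M ∘ₗ (TensorProduct.assoc A B B M).symm.toLinearMap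
  let s₂ : B ⊗[A] (B ⊗[A] (B ⊗[A] M)) →ₗ[A] B ⊗[A] (B ⊗[A] M) :=
    (LinearMap.mul' A B).rTensor (B ⊗[A] M) ∘ₗ
      (TensorProduct.assoc A B B (B ⊗[A] M)).symm.toLinearMap
  have key : s₂ ∘ₗ LinearMap.lTensor B ((TensorProduct.mk A B (B ⊗[A] M) 1 :
            B ⊗[A] M →ₗ[A] B ⊗[A] (B ⊗[A] M))
          - TensorProduct.map LinearMap.id (TensorProduct.mk A B M 1)) =
      LinearMap.id - LinearMap.lTensor B (TensorProduct.mk A B M 1) ∘ₗ s₁ := by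
    ext c b m
    simp [s₁, s₂, TensorProduct.tmul_sub]
  have zero : ((TensorProduct.mk A B (B ⊗[A] M) 1 :
            B ⊗[A] M →ₗ[A] B ⊗[A] (B ⊗[A] M))
          - TensorProduct.map LinearMap.id (TensorProduct.mk A B M 1)) ∘ₗ
      TensorProduct.mk A B M 1 = 0 := by
    ext m
    simp
  intro x
  constructor
  · intro hx
    have h := LinearMap.congr_fun key x
    rw [LinearMap.comp_apply, hx, map_zero] at h
    exact ⟨s₁ x, (sub_eq_zero.mp h.symm).symm⟩
  · rintro ⟨y, rfl⟩
    rw [← LinearMap.comp_apply, ← LinearMap.lTensor_comp, zero, LinearMap.lTensor_zero,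
      LinearMap.zero_apply]
end
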